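/- Let v ∈ L^p(ρ dx) with distributional fractional Laplacian (−Δ)^s v ∈ L^{p′}(ρ^{−(p′−1)} dx) (with ρ, γ_0 ∈ [0,d), γ ∈ [0,d+ps] as in the definition of X_{p,s,ρ}), and let v_ε = η_ε ∗ v be its standard mollification. Then (−Δ)^s(v_ε) = ((−Δ)^s v)_ε, i.e., the fractional Laplacian of the mollification equals the mollification of the fractional Laplacian; consequently v_ε ∈ C^∞(ℝ^d) ∩ X_{p,s,ρ} and v_ε → v in X_{p,s,ρ} as ε → 0, so C^∞(ℝ^d) ∩ X_{p,s,ρ} is dense in X_{p,s,ρ}. -/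

import Mathlib

open MeasureTheory Filter Metric Set
open scoped Topology ENNReal

noncomputable section

abbrev Ed (d : ℕ) := EuclideanSpace ℝ (Fin d)

/-- Truncated (away from the singularity) fractional-Laplacian integral. -/
noncomputable def fracLapTrunc (d : ℕ) (s : ℝ) (f : Ed d → ℝ) (x : Ed d) (ε : ℝ) : ℝ :=
  ∫ y in {y : Ed d | ε ≤ dist x y}, (f x - f y) / dist x y ^ ((d : ℝ) + 2 * s)

/-- Fractional Laplacian, as a principal value (limit of truncated integrals),
with normalization constant `Cds`. -/
noncomputable def fracLap (d : ℕ) (s Cds : ℝ) (f : Ed d → ℝ) (x : Ed d) : ℝ :=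
  Cds * limUnder (𝓝[>] (0:ℝ)) (fracLapTrunc d s f x)

/-- `V` is the distributional fractional Laplacian of `v`. -/
def IsDistFracLap (d : ℕ) (s Cds : ℝ) (v V : Ed d → ℝ) : Prop :=
  ∀ φ : Ed d → ℝ, ContDiff ℝ (⊤ : ℕ∞) φ → HasCompactSupport φ →
    ∫ x, v x * fracLap d s Cds φ x = ∫ x, V x * φ x

/-- The nonlocal quantity `l_{p,s}(f)(x) = ∫ |f x - f y|^p / |x-y|^{d+ps} dy`. -/
noncomputable def lps (d : ℕ) (p s : ℝ) (f : Ed d → ℝ) (x : Ed d) : ℝ :=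
  ∫ y, |f x - f y| ^ p / dist x y ^ ((d : ℝ) + p * s)

/-- A weight comparable to `|x|^{-γ₀}` on the unit ball and to `|x|^{-γ}` outside. -/
def TwoPowerWeight (d : ℕ) (ρ : Ed d → ℝ) (c C γ₀ γ : ℝ) : Prop :=
  0 < c ∧ c < C ∧
  (∀ᵐ x : Ed d, ‖x‖ ≤ 1 → c * ‖x‖ ^ (-γ₀) ≤ ρ x ∧ ρ x ≤ C * ‖x‖ ^ (-γ₀)) ∧
  (∀ᵐ x : Ed d, 1 < ‖x‖ → c * ‖x‖ ^ (-γ) ≤ ρ x ∧ ρ x ≤ C * ‖x‖ ^ (-γ))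

/-- Standard mollification `f_ε = η_ε ∗ f` with `η_ε(x) = ε^{-d} η(x/ε)`. -/
noncomputable def mollify (d : ℕ) (η : Ed d → ℝ) (ε : ℝ) (f : Ed d → ℝ) (x : Ed d) : ℝ :=
  ∫ y, (ε ^ (-(d:ℝ)) * η (ε⁻¹ • (x - y))) * f y

/-- A smooth nonnegative probability mollifier supported in the unit ball. -/
def IsMollifier (d : ℕ) (η : Ed d → ℝ) : Prop :=
  ContDiff ℝ (⊤ : ℕ∞) η ∧ (∀ x, 0 ≤ η x) ∧ tsupport η ⊆ closedBall (0 : Ed d) 1 ∧ ∫ x, η x = 1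

/-- Membership in the weighted Lebesgue space `L^p(ρ dx)`. -/
def MemWLp (d : ℕ) (p : ℝ) (ρ f : Ed d → ℝ) : Prop :=
  AEStronglyMeasurable f (volume : Measure (Ed d)) ∧
    Integrable (fun x => |f x| ^ p * ρ x)

/-- `v ∈ X_{p,s,ρ}` with distributional fractional Laplacian `V`. -/
def MemX (d : ℕ) (s Cds p : ℝ) (ρ : Ed d → ℝ) (v V : Ed d → ℝ) : Prop :=
  MemWLp d p ρ v ∧ IsDistFracLap d s Cds v V ∧
    MemWLp d (p / (p - 1)) (fun x => ρ x ^ (-(p / (p - 1) - 1))) V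

/-- Weighted `L^p` norm. -/
noncomputable def wNorm (d : ℕ) (p : ℝ) (ρ f : Ed d → ℝ) : ℝ :=
  (∫ x, |f x| ^ p * ρ x) ^ (1 / p)

/-- Norm of the space `X_{p,s,ρ}` (on the pair `(v, (−Δ)^s v)`). -/
noncomputable def xNorm (d : ℕ) (p : ℝ) (ρ : Ed d → ℝ) (v V : Ed d → ℝ) : ℝ :=
  Real.sqrt ((wNorm d p ρ v) ^ 2 +
    (wNorm d (p / (p - 1)) (fun x => ρ x ^ (-(p / (p - 1) - 1))) V) ^ 2)

/-- Riesz potential `I_{d,s} ∗ f` with kernel constant `κ`. -/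
noncomputable def riesz (d : ℕ) (s κ : ℝ) (f : Ed d → ℝ) (x : Ed d) : ℝ :=
  ∫ y, κ * ‖x - y‖ ^ (-((d:ℝ) - 2 * s)) * f y

end
open MeasureTheory Filter Metric Set
open scoped Topology ENNReal

noncomputable section

def wt (d : ℕ) (s : ℝ) (x : Ed d) : ℝ := (1 + ‖x‖) ^ (-((d : ℝ) + 2 * s))

def secD (d : ℕ) (s : ℝ) (φ : Ed d → ℝ) (x h : Ed d) : ℝ :=
  (2 * φ x - φ (x + h) - φ (x - h)) / 2 / ‖h‖ ^ ((d : ℝ) + 2 * s)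

def symL (d : ℕ) (s : ℝ) (φ : Ed d → ℝ) (x : Ed d) : ℝ := ∫ h, secD d s φ x h

lemma wt_pos (d : ℕ) (s : ℝ) (x : Ed d) : 0 < wt d s x := by unfold wt; positivity

lemma wt_cont (d : ℕ) (s : ℝ) : Continuous (wt d s) := by
  unfold wt
  refine Continuous.rpow_const (by fun_prop) (fun x => Or.inl (by positivity))

lemma wt_le (d : ℕ) (s : ℝ) (hs : 0 < s) (y z : Ed d) (R : ℝ) (h : ‖y - z‖ ≤ R) :
    wt d s y ≤ (1 + R) ^ ((d : ℝ) + 2 * s) * wt d s z := by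
  unfold wt
  have hR : 0 ≤ R := (norm_nonneg _).trans h
  rw [Real.rpow_neg (by positivity), Real.rpow_neg (by positivity), ← div_eq_mul_inv,
    le_div_iff₀ (by positivity), inv_mul_le_iff₀ (by positivity),
    ← Real.mul_rpow (by positivity) (by positivity)]
  refine Real.rpow_le_rpow (by positivity) ?_ (by positivity)
  have : ‖z‖ ≤ ‖y‖ + R := by
    calc ‖z‖ = ‖y - (y - z)‖ := by congr 1; abel
      _ ≤ ‖y‖ + ‖y - z‖ := norm_sub_le _ _
      _ ≤ _ := by linarith
  nlinarith [norm_nonneg y]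

lemma ker_meas (d : ℕ) (a : ℝ) : Measurable (fun h : Ed d => (‖h‖ ^ a)⁻¹) := by
  fun_prop

lemma wt_integrable (d : ℕ) (s : ℝ) (hs : 0 < s) : Integrable (wt d s) := by
  unfold wt
  exact integrable_one_add_norm (by simp; positivity)

lemma ker_le_wt (d : ℕ) (s : ℝ) (hs : 0 < s) (δ : ℝ) (hδ : 0 < δ) (h : Ed d) (hh : δ ≤ ‖h‖) :
    (‖h‖ ^ ((d : ℝ) + 2 * s))⁻¹ ≤ (1 + δ⁻¹) ^ ((d : ℝ) + 2 * s) * wt d s h := by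
  have hp : 0 < ‖h‖ := hδ.trans_le hh
  unfold wt
  rw [Real.rpow_neg (by positivity), ← div_eq_mul_inv, inv_eq_one_div,
    div_le_div_iff₀ (by positivity) (by positivity), one_mul,
    ← Real.mul_rpow (by positivity) (by positivity)]
  refine Real.rpow_le_rpow (by positivity) ?_ (by positivity)
  have : 1 ≤ δ⁻¹ * ‖h‖ := by rw [inv_mul_eq_div, le_div_iff₀ hδ]; simpa using hh
  nlinarith

lemma ms_tail (d : ℕ) (δ : ℝ) : MeasurableSet {h : Ed d | δ ≤ ‖h‖} :=
  measurableSet_le measurable_const measurable_norm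

lemma ker_tail (d : ℕ) (s : ℝ) (hs : 0 < s) (δ : ℝ) (hδ : 0 < δ) :
    IntegrableOn (fun h : Ed d => (‖h‖ ^ ((d : ℝ) + 2 * s))⁻¹) {h | δ ≤ ‖h‖} := by
  refine Integrable.mono' (((wt_integrable d s hs).const_mul
    ((1 + δ⁻¹) ^ ((d : ℝ) + 2 * s))).integrableOn) (ker_meas d _).aestronglyMeasurable ?_
  filter_upwards [ae_restrict_mem (ms_tail d δ)] with h hh
  rw [Real.norm_of_nonneg (by positivity)]
  exact ker_le_wt d s hs δ hδ h hh

lemma pow_loc (d : ℕ) (hd : 1 ≤ d) (a : ℝ) (ha : a < d) :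
    LocallyIntegrable (fun h : Ed d => ‖h‖ ^ (-a)) := by
  refine locallyIntegrable_of_norm_le_rpow (C := 1) (α := a) (by simpa using hd) (by simpa using ha)
    (Eventually.of_forall fun x => ?_) (Measurable.aestronglyMeasurable (by fun_prop))
  rw [Real.norm_of_nonneg (by positivity), one_mul]

lemma dom_int (d : ℕ) (hd : 1 ≤ d) (s : ℝ) (hs : s ∈ Set.Ioo (0:ℝ) 1) :
    Integrable (fun h : Ed d => min 1 (‖h‖ ^ 2) * (‖h‖ ^ ((d : ℝ) + 2 * s))⁻¹) := by
  have hm : Measurable (fun h : Ed d => min 1 (‖h‖ ^ 2) * (‖h‖ ^ ((d : ℝ) + 2 * s))⁻¹) := by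
    fun_prop
  have e : (univ : Set (Ed d)) = closedBall 0 1 ∪ {h | 1 ≤ ‖h‖} := by
    ext h; simp [le_total]
  rw [← integrableOn_univ, e]
  refine IntegrableOn.union ?_ ?_
  · have := (pow_loc d hd ((d : ℝ) + 2 * s - 2) (by linarith [hs.2])).integrableOn_isCompact
      (isCompact_closedBall (0 : Ed d) 1)
    refine Integrable.mono' this hm.aestronglyMeasurable (Eventually.of_forall fun h => ?_)
    rw [Real.norm_of_nonneg (by positivity)]
    rcases eq_or_ne h 0 with rfl | h0
    · simp; positivity
    have hp : 0 < ‖h‖ := norm_pos_iff.2 h0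
    calc min 1 (‖h‖ ^ 2) * (‖h‖ ^ ((d : ℝ) + 2 * s))⁻¹
        ≤ ‖h‖ ^ (2:ℝ) * (‖h‖ ^ (-((d : ℝ) + 2 * s))) := by
          rw [Real.rpow_neg hp.le, Real.rpow_two]; gcongr; exact min_le_right _ _
      _ = _ := by rw [← Real.rpow_add hp]; congr 1; ring
  · refine Integrable.mono' (ker_tail d s hs.1 1 one_pos) hm.aestronglyMeasurable
      (Eventually.of_forall fun h => ?_)
    rw [Real.norm_of_nonneg (by positivity)]
    exact mul_le_of_le_one_left (by positivity) (min_le_left _ _)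

lemma secdiff_bound (d : ℕ) (φ : Ed d → ℝ) (h1 : ContDiff ℝ (⊤ : ℕ∞) φ)
    (h2 : HasCompactSupport φ) :
    ∃ M : ℝ, 0 ≤ M ∧ ∀ x h, |2 * φ x - φ (x + h) - φ (x - h)| ≤ M * min 1 (‖h‖ ^ 2) := by
  obtain ⟨B, hB⟩ := h2.exists_bound_of_continuous h1.continuous
  have hB0 : 0 ≤ B := (norm_nonneg _).trans (hB 0)
  obtain ⟨Lc, hL⟩ := ContDiff.lipschitzWith_of_hasCompactSupport (𝕂 := ℝ) (h2.fderiv ℝ)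
    (h1.fderiv_right (m := 1) (by norm_cast)) (by simp)
  have hdiff : Differentiable ℝ φ := h1.differentiable (by simp)
  refine ⟨max (4 * B) (2 * Lc), by positivity, fun x h => ?_⟩
  rw [mul_min_of_nonneg _ _ (by positivity)]
  refine le_min ?_ ?_
  · have a := hB x; have b := hB (x + h); have c := hB (x - h)
    rw [Real.norm_eq_abs] at a b c
    rw [mul_one]
    refine le_trans ?_ (le_max_left _ _)
    rw [abs_le] at *
    constructor <;> linarith
  · have key := Convex.norm_image_sub_le_of_norm_hasFDerivWithin_le
      (f := fun k => φ (x + k) + φ (x - k)) (f' := fun k => fderiv ℝ φ (x + k) - fderiv ℝ φ (x - k))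
      (C := 2 * Lc * ‖h‖) (s := closedBall (0 : Ed d) ‖h‖) (x := 0) (y := h) ?_ ?_
      (convex_closedBall _ _) (by simp) (by simp)
    · simp only [add_zero, sub_zero] at key
      rw [← Real.norm_eq_abs, ← norm_neg]
      calc _ = ‖φ (x + h) + φ (x - h) - (φ x + φ x)‖ := by congr 1; ring
        _ ≤ _ := key
        _ = 2 * Lc * ‖h‖ ^ 2 := by ring
        _ ≤ _ := by gcongr; exact le_max_right _ _
    · intro k hk
      have a : HasFDerivAt (fun k => φ (x + k)) (fderiv ℝ φ (x + k)) k := by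
        have := (hdiff (x + k)).hasFDerivAt.comp k ((hasFDerivAt_id k).const_add x)
        refine this.congr_fderiv ?_
        ext; simp
      have b : HasFDerivAt (fun k => φ (x - k)) (- fderiv ℝ φ (x - k)) k := by
        have := (hdiff (x - k)).hasFDerivAt.comp k ((hasFDerivAt_id k).const_sub x)
        refine this.congr_fderiv ?_
        ext; simp
      exact ((a.add b).congr_fderiv (sub_eq_add_neg _ _).symm).hasFDerivWithinAt
    · intro k hk
      have := hL.dist_le_mul (x + k) (x - k)
      rw [dist_eq_norm, dist_eq_norm] at this
      refine this.trans ?_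
      have e : x + k - (x - k) = (2:ℝ) • k := by rw [two_smul]; abel
      rw [e, norm_smul]
      simp at hk ⊢
      have : (0:ℝ) ≤ Lc := Lc.2
      nlinarith

lemma secD_bound (d : ℕ) (s : ℝ) (φ : Ed d → ℝ) (h1 : ContDiff ℝ (⊤ : ℕ∞) φ)
    (h2 : HasCompactSupport φ) :
    ∃ M : ℝ, 0 ≤ M ∧ ∀ x h, ‖secD d s φ x h‖ ≤
      M * (min 1 (‖h‖ ^ 2) * (‖h‖ ^ ((d : ℝ) + 2 * s))⁻¹) := by
  obtain ⟨M, hM, hb⟩ := secdiff_bound d φ h1 h2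
  refine ⟨M, hM, fun x h => ?_⟩
  unfold secD
  rw [Real.norm_eq_abs, abs_div, abs_div, abs_of_nonneg (by positivity : 0 ≤ ‖h‖ ^ ((d : ℝ) + 2 * s)),
    div_eq_mul_inv, ← mul_assoc]
  gcongr
  have := hb x h
  rw [abs_two]
  linarith [abs_nonneg (2 * φ x - φ (x + h) - φ (x - h))]

lemma secD_meas (d : ℕ) (s : ℝ) (φ : Ed d → ℝ) (h1 : Continuous φ) (x : Ed d) :
    Measurable (secD d s φ x) := by
  unfold secD
  have := h1.measurable
  fun_prop

lemma trunc_eq (d : ℕ) (s : ℝ) (f : Ed d → ℝ) (x : Ed d) (δ : ℝ) :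
    fracLapTrunc d s f x δ = ∫ h in {h | δ ≤ ‖h‖}, (f x - f (x + h)) / ‖h‖ ^ ((d : ℝ) + 2 * s) := by
  unfold fracLapTrunc
  have ms : MeasurableSet {y : Ed d | δ ≤ dist x y} :=
    measurableSet_le measurable_const (by fun_prop)
  rw [← integral_indicator ms, ← integral_indicator (ms_tail d δ), ← integral_add_left_eq_self _ x]
  congr 1; ext h
  simp [indicator, dist_eq_norm]

lemma tail_int (d : ℕ) (s : ℝ) (hs : 0 < s) (f : Ed d → ℝ) (hf : Measurable f) (B : ℝ)
    (hB : ∀ x, |f x| ≤ B) (δ : ℝ) (hδ : 0 < δ) :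
    IntegrableOn (fun h => f h / ‖h‖ ^ ((d : ℝ) + 2 * s)) {h | δ ≤ ‖h‖} := by
  refine Integrable.mono' ((ker_tail d s hs δ hδ).const_mul B)
    (Measurable.aestronglyMeasurable (by fun_prop))
    (Eventually.of_forall fun h => ?_)
  rw [norm_div, div_eq_mul_inv, Real.norm_of_nonneg (by positivity : 0 ≤ ‖h‖ ^ ((d : ℝ) + 2 * s))]
  gcongr
  exact hB h

lemma trunc_sym (d : ℕ) (s : ℝ) (hs : 0 < s) (φ : Ed d → ℝ) (h1 : Continuous φ)
    (h2 : HasCompactSupport φ) (x : Ed d) (δ : ℝ) (hδ : 0 < δ) :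
    fracLapTrunc d s φ x δ = ∫ h in {h | δ ≤ ‖h‖}, secD d s φ x h := by
  obtain ⟨B, hB⟩ := h2.exists_bound_of_continuous h1
  have hm := h1.measurable
  have i1 : IntegrableOn (fun h => (φ x - φ (x + h)) / ‖h‖ ^ ((d : ℝ) + 2 * s)) {h | δ ≤ ‖h‖} :=
    tail_int d s hs (fun h => φ x - φ (x + h)) (by fun_prop) (B + B)
      (fun h => (abs_sub _ _).trans (add_le_add (hB _) (hB _))) δ hδ
  have i2 : IntegrableOn (fun h => (φ x - φ (x - h)) / ‖h‖ ^ ((d : ℝ) + 2 * s)) {h | δ ≤ ‖h‖} :=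
    tail_int d s hs (fun h => φ x - φ (x - h)) (by fun_prop) (B + B)
      (fun h => (abs_sub _ _).trans (add_le_add (hB _) (hB _))) δ hδ
  have e : ∫ h in {h | δ ≤ ‖h‖}, (φ x - φ (x + h)) / ‖h‖ ^ ((d : ℝ) + 2 * s) =
      ∫ h in {h | δ ≤ ‖h‖}, (φ x - φ (x - h)) / ‖h‖ ^ ((d : ℝ) + 2 * s) := by
    rw [← integral_indicator (ms_tail d δ), ← integral_indicator (ms_tail d δ),
      ← integral_neg_eq_self]
    congr 1; ext h
    simp [indicator, sub_eq_add_neg]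
  have e2 : ∀ h, secD d s φ x h = 1/2 * ((φ x - φ (x + h)) / ‖h‖ ^ ((d : ℝ) + 2 * s) +
      (φ x - φ (x - h)) / ‖h‖ ^ ((d : ℝ) + 2 * s)) := by
    intro h; unfold secD; ring
  simp_rw [e2]
  rw [integral_const_mul, integral_add i1 i2, ← e, trunc_eq]
  ring

lemma symL_tendsto (d : ℕ) (hd : 1 ≤ d) (s : ℝ) (hs : s ∈ Set.Ioo (0:ℝ) 1) (φ : Ed d → ℝ)
    (h1 : ContDiff ℝ (⊤ : ℕ∞) φ) (h2 : HasCompactSupport φ) (x : Ed d) :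
    Tendsto (fracLapTrunc d s φ x) (𝓝[>] 0) (𝓝 (symL d s φ x)) := by
  obtain ⟨M, hM, hb⟩ := secD_bound d s φ h1 h2
  have : Tendsto (fun δ : ℝ => ∫ h, indicator {h | δ ≤ ‖h‖} (secD d s φ x) h) (𝓝[>] 0)
      (𝓝 (symL d s φ x)) := by
    refine tendsto_integral_filter_of_dominated_convergence _
      (Eventually.of_forall fun δ => ((secD_meas d s φ h1.continuous x).indicator
        (ms_tail d δ)).aestronglyMeasurable)
      (Eventually.of_forall fun δ => Eventually.of_forall fun h =>
        (norm_indicator_le_norm_self _ _).trans (hb x h)) ((dom_int d hd s hs).const_mul M) ?_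
    have : Nontrivial (Ed d) := by
      have : Nonempty (Fin d) := ⟨⟨0, hd⟩⟩
      infer_instance
    filter_upwards [compl_mem_ae_iff.2 (measure_singleton (0 : Ed d))] with h hh
    refine tendsto_const_nhds.congr' ?_
    have hp : 0 < ‖h‖ := norm_pos_iff.2 hh
    filter_upwards [Ioo_mem_nhdsGT hp] with δ hδ
    rw [indicator_of_mem]
    exact hδ.2.le
  refine this.congr' ?_
  filter_upwards [self_mem_nhdsWithin] with δ hδ
  rw [trunc_sym d s hs.1 φ h1.continuous h2 x δ hδ, integral_indicator (ms_tail d δ)]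

lemma fracLap_eq (d : ℕ) (hd : 1 ≤ d) (s : ℝ) (hs : s ∈ Set.Ioo (0:ℝ) 1) (Cds : ℝ) (φ : Ed d → ℝ)
    (h1 : ContDiff ℝ (⊤ : ℕ∞) φ) (h2 : HasCompactSupport φ) (x : Ed d) :
    fracLap d s Cds φ x = Cds * symL d s φ x := by
  unfold fracLap
  rw [(symL_tendsto d hd s hs φ h1 h2 x).limUnder_eq]

lemma symL_cont (d : ℕ) (hd : 1 ≤ d) (s : ℝ) (hs : s ∈ Set.Ioo (0:ℝ) 1) (φ : Ed d → ℝ)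
    (h1 : ContDiff ℝ (⊤ : ℕ∞) φ) (h2 : HasCompactSupport φ) : Continuous (symL d s φ) := by
  obtain ⟨M, hM, hb⟩ := secD_bound d s φ h1 h2
  unfold symL
  refine continuous_of_dominated
    (fun x => (secD_meas d s φ h1.continuous x).aestronglyMeasurable)
    (fun x => Eventually.of_forall fun h => hb x h) ((dom_int d hd s hs).const_mul M)
    (Eventually.of_forall fun h => ?_)
  unfold secD
  have := h1.continuous
  fun_prop

set_option maxHeartbeats 1000000 in
/-- uniform decay of truncated fractional Laplacians of test functions -/
lemma trunc_bound (d : ℕ) (hd : 1 ≤ d) (s : ℝ) (hs : s ∈ Set.Ioo (0:ℝ) 1) (φ : Ed d → ℝ)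
    (h1 : ContDiff ℝ (⊤ : ℕ∞) φ) (h2 : HasCompactSupport φ) :
    ∃ K : ℝ, 0 ≤ K ∧ ∀ δ > 0, ∀ x, |fracLapTrunc d s φ x δ| ≤ K * wt d s x := by
  obtain ⟨M, hM, hb⟩ := secD_bound d s φ h1 h2
  obtain ⟨R0, hR0⟩ := h2.isCompact.isBounded.subset_closedBall 0
  set R := max R0 1
  have hR1 : 1 ≤ R := le_max_right _ _
  have hzero : ∀ y, R < ‖y‖ → φ y = 0 := by
    intro y hy
    by_contra hne
    have := hR0 (subset_tsupport φ hne)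
    simp at this
    exact absurd (this.trans (le_max_left R0 1)) (not_le.2 hy)
  set I := ∫ h : Ed d, M * (min 1 (‖h‖ ^ 2) * (‖h‖ ^ ((d : ℝ) + 2 * s))⁻¹)
  have hI : 0 ≤ I := integral_nonneg fun h => by positivity
  set N := ∫ y, |φ y|
  have hN : 0 ≤ N := integral_nonneg fun h => by positivity
  have hs0 := hs.1
  have hφi : Integrable φ := h1.continuous.integrable_of_hasCompactSupport h2
  set a := (d : ℝ) + 2 * s
  have ha : 0 < a := by positivity
  refine ⟨I * (1 + 2 * R) ^ a + N * (1 + 1) ^ a * 2 ^ a,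
    by positivity, fun δ hδ x => ?_⟩
  rw [add_mul]
  rcases le_or_gt ‖x‖ (2 * R) with hx | hx
  · have b1 : |fracLapTrunc d s φ x δ| ≤ I := by
      rw [trunc_sym d s hs.1 φ h1.continuous h2 x δ hδ, ← integral_indicator (ms_tail d δ),
        ← Real.norm_eq_abs]
      refine norm_integral_le_of_norm_le ((dom_int d hd s hs).const_mul M)
        (Eventually.of_forall fun h => ?_)
      exact (norm_indicator_le_norm_self _ _).trans (hb x h)
    have b2 : 1 ≤ (1 + 2 * R) ^ a * wt d s x := by
      have := wt_le d s hs.1 0 x (2 * R) (by simpa using hx)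
      simpa [wt] using this
    have b3 : 0 ≤ N * (1 + 1) ^ a * 2 ^ a * wt d s x := by
      have := wt_pos d s x; positivity
    nlinarith
  · have hxp : 0 < ‖x‖ := by linarith
    have b1 : |fracLapTrunc d s φ x δ| ≤ N * (2 ^ a * (‖x‖ ^ a)⁻¹) := by
      unfold fracLapTrunc
      have ms : MeasurableSet {y : Ed d | δ ≤ dist x y} :=
        measurableSet_le measurable_const (by fun_prop)
      rw [← integral_indicator ms, ← Real.norm_eq_abs, ← integral_mul_const]
      refine norm_integral_le_of_norm_le (hφi.abs.mul_const _) (Eventually.of_forall fun y => ?_)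
      refine (norm_indicator_le_norm_self _ _).trans ?_
      rw [hzero x (by linarith), zero_sub, norm_div, norm_neg, Real.norm_eq_abs, div_eq_mul_inv,
        Real.norm_of_nonneg (by positivity)]
      rcases le_or_gt ‖y‖ R with hy | hy
      · refine mul_le_mul_of_nonneg_left ?_ (abs_nonneg _)
        have t : ‖x‖ / 2 ≤ dist x y := by
          rw [dist_eq_norm]
          have := norm_sub_norm_le x y
          linarith
        calc (dist x y ^ a)⁻¹ ≤ ((‖x‖ / 2) ^ a)⁻¹ := by gcongr
          _ = _ := by rw [Real.div_rpow hxp.le (by norm_num), inv_div, div_eq_mul_inv]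
      · rw [hzero y hy]; simp
    have b2 := ker_le_wt d s hs.1 1 one_pos x (by linarith)
    have b3 : 0 ≤ I * (1 + 2 * R) ^ a * wt d s x :=
      mul_nonneg (mul_nonneg hI (Real.rpow_nonneg (by linarith) _)) (wt_pos d s x).le
    rw [inv_one] at b2
    calc _ ≤ _ := b1
      _ ≤ N * (2 ^ a * ((1 + 1) ^ a * wt d s x)) := by gcongr
      _ = N * (1 + 1) ^ a * 2 ^ a * wt d s x := by ring
      _ ≤ _ := by linarith

lemma symL_bound (d : ℕ) (hd : 1 ≤ d) (s : ℝ) (hs : s ∈ Set.Ioo (0:ℝ) 1) (φ : Ed d → ℝ)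
    (h1 : ContDiff ℝ (⊤ : ℕ∞) φ) (h2 : HasCompactSupport φ) :
    ∃ K : ℝ, 0 ≤ K ∧ ∀ x, |symL d s φ x| ≤ K * wt d s x := by
  obtain ⟨K, hK, hb⟩ := trunc_bound d hd s hs φ h1 h2
  refine ⟨K, hK, fun x => ?_⟩
  refine le_of_tendsto (symL_tendsto d hd s hs φ h1 h2 x).abs ?_
  filter_upwards [self_mem_nhdsWithin] with δ hδ
  exact hb δ hδ x
end

open MeasureTheory Filter Metric Set
open scoped Topology ENNReal

noncomputable section

def cv (d : ℕ) (ψ f : Ed d → ℝ) (x : Ed d) : ℝ := ∫ z, ψ (x - z) * f z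

def gk (d : ℕ) (s : ℝ) (x : Ed d) (δ : ℝ) (y : Ed d) : ℝ :=
  indicator {y : Ed d | δ ≤ dist x y} (fun y => (dist x y ^ ((d : ℝ) + 2 * s))⁻¹) y

lemma ms_dist (d : ℕ) (x : Ed d) (δ : ℝ) : MeasurableSet {y : Ed d | δ ≤ dist x y} :=
  measurableSet_le measurable_const (by fun_prop)

lemma gk_meas (d : ℕ) (s : ℝ) (x : Ed d) (δ : ℝ) : Measurable (gk d s x δ) := by
  unfold gk
  exact Measurable.indicator (by fun_prop) (ms_dist d x δ)

lemma trunc_gk (d : ℕ) (s : ℝ) (f : Ed d → ℝ) (x : Ed d) (δ : ℝ) :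
    fracLapTrunc d s f x δ = ∫ y, (f x - f y) * gk d s x δ y := by
  unfold fracLapTrunc gk
  rw [← integral_indicator (ms_dist d x δ)]
  congr 1; ext y
  by_cases h : δ ≤ dist x y <;> simp [indicator, h, div_eq_mul_inv]

lemma gk_bound (d : ℕ) (s : ℝ) (hs : 0 < s) (x : Ed d) (δ : ℝ) (hδ : 0 < δ) :
    ∃ A : ℝ, 0 ≤ A ∧ ∀ y, |gk d s x δ y| ≤ A * wt d s y := by
  refine ⟨(1 + δ⁻¹) ^ ((d : ℝ) + 2 * s) * (1 + ‖x‖) ^ ((d : ℝ) + 2 * s), by positivity,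
    fun y => ?_⟩
  have hw := wt_pos d s y
  unfold gk
  by_cases h : δ ≤ dist x y
  · rw [indicator_of_mem (by exact h), abs_of_nonneg (by positivity), dist_comm, dist_eq_norm]
    rw [dist_comm, dist_eq_norm] at h
    refine (ker_le_wt d s hs δ hδ _ h).trans ?_
    rw [mul_assoc]
    gcongr
    refine wt_le d s hs _ _ _ ?_
    simp
  · rw [indicator_of_notMem (by exact h)]; simp; positivity

lemma psi_wt (d : ℕ) (s : ℝ) (hs : 0 < s) (ψ : Ed d → ℝ) (h2 : HasCompactSupport ψ) :
    ∃ A : ℝ, 0 ≤ A ∧ ∀ y z, |ψ (y - z)| * wt d s y ≤ A * (|ψ (y - z)| * wt d s z) := by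
  obtain ⟨R0, hR0⟩ := h2.isCompact.isBounded.subset_closedBall 0
  set R := max R0 0
  have hR : 0 ≤ R := le_max_right _ _
  refine ⟨(1 + R) ^ ((d : ℝ) + 2 * s), by positivity, fun y z => ?_⟩
  by_cases h : ψ (y - z) = 0
  · simp [h]
  · have : ‖y - z‖ ≤ R := by
      have := hR0 (subset_tsupport ψ h)
      simp only [mem_closedBall, dist_zero_right] at this
      exact this.trans (le_max_left _ _)
    have := wt_le d s hs y z R this
    calc _ ≤ |ψ (y - z)| * ((1 + R) ^ ((d : ℝ) + 2 * s) * wt d s z) := by gcongr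
      _ = _ := by ring

lemma prod_int (d : ℕ) (s : ℝ) (hs : 0 < s) (ψ : Ed d → ℝ) (h1 : Continuous ψ)
    (h2 : HasCompactSupport ψ) (f g : Ed d → ℝ) (hf : Measurable f)
    (hfi : Integrable (fun z => f z * wt d s z)) (hg : Measurable g) (A : ℝ)
    (hgb : ∀ y, |g y| ≤ A * wt d s y) :
    Integrable (fun q : Ed d × Ed d => ψ (q.1 - q.2) * f q.2 * g q.1) (volume.prod volume) := by
  obtain ⟨B, hB0, hB⟩ := psi_wt d s hs ψ h2
  have hA : 0 ≤ A := by
    have := (abs_nonneg _).trans (hgb 0)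
    exact nonneg_of_mul_nonneg_left this (wt_pos d s 0)
  have hψi : Integrable ψ := h1.integrable_of_hasCompactSupport h2
  have key := (Integrable.convolution_integrand (ContinuousLinearMap.mul ℝ ℝ) hfi hψi).norm.const_mul
    (A * B)
  have := h1.measurable
  refine Integrable.mono' key (Measurable.aestronglyMeasurable (by fun_prop))
    (Eventually.of_forall fun q => ?_)
  simp only [norm_mul, Real.norm_eq_abs, ContinuousLinearMap.mul_apply']
  rw [abs_of_pos (wt_pos d s q.2)]
  calc |ψ (q.1 - q.2)| * |f q.2| * |g q.1|
      ≤ |ψ (q.1 - q.2)| * |f q.2| * (A * wt d s q.1) := by gcongr; exact hgb _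
    _ = A * |f q.2| * (|ψ (q.1 - q.2)| * wt d s q.1) := by ring
    _ ≤ A * |f q.2| * (B * (|ψ (q.1 - q.2)| * wt d s q.2)) := by
        gcongr ?_ * ?_; exact hB _ _
    _ = _ := by ring

lemma cv_int (d : ℕ) (s : ℝ) (hs : 0 < s) (ψ : Ed d → ℝ) (h1 : Continuous ψ)
    (h2 : HasCompactSupport ψ) (f : Ed d → ℝ) (hf : Measurable f)
    (hfi : Integrable (fun z => f z * wt d s z)) (x : Ed d) :
    Integrable (fun z => ψ (x - z) * f z) := by
  obtain ⟨B, hB0, hB⟩ := psi_wt d s hs ψ h2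
  obtain ⟨M, hM⟩ := h2.exists_bound_of_continuous h1
  have := h1.measurable
  have hx := wt_pos d s x
  refine Integrable.mono' (hfi.norm.const_mul ((wt d s x)⁻¹ * B * M))
    (Measurable.aestronglyMeasurable (by fun_prop)) (Eventually.of_forall fun z => ?_)
  have hz := wt_pos d s z
  simp only [norm_mul, Real.norm_eq_abs]
  rw [abs_of_pos hz]
  calc |ψ (x - z)| * |f z| = (wt d s x)⁻¹ * |f z| * (|ψ (x - z)| * wt d s x) := by
        field_simp
    _ ≤ (wt d s x)⁻¹ * |f z| * (B * (|ψ (x - z)| * wt d s z)) := by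
        gcongr ?_ * ?_; exact hB _ _
    _ ≤ (wt d s x)⁻¹ * |f z| * (B * (M * wt d s z)) := by
        gcongr; exact hM _
    _ = _ := by ring

lemma trunc_cv (d : ℕ) (s : ℝ) (hs : s ∈ Set.Ioo (0:ℝ) 1) (ψ : Ed d → ℝ)
    (h1 : Continuous ψ) (h2 : HasCompactSupport ψ) (f : Ed d → ℝ) (hf : Measurable f)
    (hfi : Integrable (fun z => f z * wt d s z)) (x : Ed d) (δ : ℝ) (hδ : 0 < δ) :
    fracLapTrunc d s (cv d ψ f) x δ = ∫ z, f z * fracLapTrunc d s ψ (x - z) δ := by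
  obtain ⟨A, hA, hgb⟩ := gk_bound d s hs.1 x δ hδ
  have hgm := gk_meas d s x δ
  have hgi : Integrable (gk d s x δ) := Integrable.mono' ((wt_integrable d s hs.1).const_mul A)
    hgm.aestronglyMeasurable (Eventually.of_forall fun y => hgb y)
  have i1 : Integrable (fun q : Ed d × Ed d => gk d s x δ q.1 * (ψ (x - q.2) * f q.2))
    (volume.prod volume) := hgi.mul_prod (cv_int d s hs.1 ψ h1 h2 f hf hfi x)
  have i2 := prod_int d s hs.1 ψ h1 h2 f _ hf hfi hgm A hgb
  have e1 : fracLapTrunc d s (cv d ψ f) x δ =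
      ∫ y, ∫ z, (gk d s x δ y * (ψ (x - z) * f z) - ψ (y - z) * f z * gk d s x δ y) := by
    rw [trunc_gk]
    congr 1; ext y
    rw [integral_sub, integral_const_mul, integral_mul_const]
    · unfold cv; ring
    · exact (cv_int d s hs.1 ψ h1 h2 f hf hfi x).const_mul _
    · exact (cv_int d s hs.1 ψ h1 h2 f hf hfi y).mul_const _
  rw [e1, integral_integral_swap (by exact i1.sub i2)]
  congr 1; ext z
  rw [trunc_gk, ← integral_const_mul]
  conv_rhs => rw [← integral_sub_right_eq_self _ z]
  congr 1; ext y
  have : gk d s (x - z) δ (y - z) = gk d s x δ y := by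
    simp [gk, indicator]
  rw [this]; ring

lemma wt_shift_int (d : ℕ) (s : ℝ) (hs : 0 < s) (f : Ed d → ℝ) (hf : Measurable f)
    (hfi : Integrable (fun z => f z * wt d s z)) (x : Ed d) :
    Integrable (fun z => |f z| * wt d s (x - z)) := by
  have := (wt_cont d s).measurable
  refine Integrable.mono' (hfi.norm.const_mul ((1 + ‖x‖) ^ ((d : ℝ) + 2 * s)))
    (Measurable.aestronglyMeasurable (by fun_prop)) (Eventually.of_forall fun z => ?_)
  simp only [norm_mul, Real.norm_eq_abs, abs_abs]
  rw [abs_of_pos (wt_pos d s _), abs_of_pos (wt_pos d s _)]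
  have e : wt d s (x - z) = wt d s (z - x) := by simp [wt, norm_sub_rev]
  rw [e]
  have := wt_le d s hs (z - x) z ‖x‖ (by simp)
  calc _ ≤ |f z| * ((1 + ‖x‖) ^ ((d : ℝ) + 2 * s) * wt d s z) := by gcongr
    _ = _ := by ring

lemma cv_tendsto (d : ℕ) (hd : 1 ≤ d) (s : ℝ) (hs : s ∈ Set.Ioo (0:ℝ) 1) (ψ : Ed d → ℝ)
    (h1 : ContDiff ℝ (⊤ : ℕ∞) ψ) (h2 : HasCompactSupport ψ) (f : Ed d → ℝ) (hf : Measurable f)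
    (hfi : Integrable (fun z => f z * wt d s z)) (x : Ed d) :
    Tendsto (fracLapTrunc d s (cv d ψ f) x) (𝓝[>] 0) (𝓝 (∫ z, f z * symL d s ψ (x - z))) := by
  obtain ⟨K, hK, hb⟩ := trunc_bound d hd s hs ψ h1 h2
  have hc := h1.continuous
  have hcm := hc.measurable
  have : Tendsto (fun δ : ℝ => ∫ z, f z * fracLapTrunc d s ψ (x - z) δ) (𝓝[>] 0)
      (𝓝 (∫ z, f z * symL d s ψ (x - z))) := by
    refine tendsto_integral_filter_of_dominated_convergence
      (fun z => K * (|f z| * wt d s (x - z))) ?_ ?_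
      ((wt_shift_int d s hs.1 f hf hfi x).const_mul K) ?_
    · filter_upwards with δ
      refine hf.aestronglyMeasurable.mul ?_
      have e : (fun z => fracLapTrunc d s ψ (x - z) δ) = fun z => ∫ h in {h | δ ≤ ‖h‖},
          (ψ (x - z) - ψ (x - z + h)) / ‖h‖ ^ ((d : ℝ) + 2 * s) := by
        ext z; rw [trunc_eq]
      rw [e]
      refine StronglyMeasurable.aestronglyMeasurable ?_
      refine StronglyMeasurable.integral_prod_right (f := fun z h =>
          (ψ (x - z) - ψ (x - z + h)) / ‖h‖ ^ ((d : ℝ) + 2 * s)) ?_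
      refine Measurable.stronglyMeasurable ?_
      unfold Function.uncurry
      fun_prop
    · filter_upwards [self_mem_nhdsWithin] with δ hδ
      refine Eventually.of_forall fun z => ?_
      rw [norm_mul, Real.norm_eq_abs, Real.norm_eq_abs]
      calc _ ≤ |f z| * (K * wt d s (x - z)) := by gcongr; exact hb δ hδ _
        _ = _ := by ring
    · refine Eventually.of_forall fun z => ?_
      exact (symL_tendsto d hd s hs ψ h1 h2 (x - z)).const_mul _
  refine this.congr' ?_
  filter_upwards [self_mem_nhdsWithin] with δ hδ
  rw [trunc_cv d s hs ψ hc h2 f hf hfi x δ hδ]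

lemma fracLap_cv (d : ℕ) (hd : 1 ≤ d) (s : ℝ) (hs : s ∈ Set.Ioo (0:ℝ) 1) (Cds : ℝ) (ψ : Ed d → ℝ)
    (h1 : ContDiff ℝ (⊤ : ℕ∞) ψ) (h2 : HasCompactSupport ψ) (f : Ed d → ℝ) (hf : Measurable f)
    (hfi : Integrable (fun z => f z * wt d s z)) (x : Ed d) :
    fracLap d s Cds (cv d ψ f) x = ∫ z, f z * (Cds * symL d s ψ (x - z)) := by
  unfold fracLap
  rw [(cv_tendsto d hd s hs ψ h1 h2 f hf hfi x).limUnder_eq, ← integral_const_mul]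
  congr 1; ext z; ring

lemma loc_int (d : ℕ) (s : ℝ) (f : Ed d → ℝ)
    (hfi : Integrable (fun z => f z * wt d s z)) : LocallyIntegrable f := by
  have h := hfi.locallyIntegrable.locallyIntegrableOn univ
  have hc : Continuous (fun z => (wt d s z)⁻¹) :=
    (wt_cont d s).inv₀ (fun x => (wt_pos d s x).ne')
  rw [← locallyIntegrableOn_univ]
  have := h.mul_continuousOn hc.continuousOn isOpen_univ.isLocallyClosed
  refine this.congr ?_
  filter_upwards with z
  have := wt_pos d s z
  field_simp

lemma cv_contDiff (d : ℕ) (s : ℝ) (ψ : Ed d → ℝ)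
    (h1 : ContDiff ℝ (⊤ : ℕ∞) ψ) (h2 : HasCompactSupport ψ) (f : Ed d → ℝ)
    (hfi : Integrable (fun z => f z * wt d s z)) :
    ContDiff ℝ (⊤ : ℕ∞) (cv d ψ f) := by
  have := h2.contDiff_convolution_right (ContinuousLinearMap.mul ℝ ℝ) (loc_int d s f hfi) h1
    (μ := volume)
  convert this using 1
  ext x
  unfold cv convolution
  simp [mul_comm]

/-- The pointwise identity -/
lemma part1 (d : ℕ) (hd : 1 ≤ d) (s : ℝ) (hs : s ∈ Set.Ioo (0:ℝ) 1) (Cds : ℝ) (ψ : Ed d → ℝ)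
    (h1 : ContDiff ℝ (⊤ : ℕ∞) ψ) (h2 : HasCompactSupport ψ) (v V : Ed d → ℝ) (hv : Measurable v)
    (hvi : Integrable (fun z => v z * wt d s z)) (hD : IsDistFracLap d s Cds v V) (x : Ed d) :
    fracLap d s Cds (cv d ψ v) x = cv d ψ V x := by
  rw [fracLap_cv d hd s hs Cds ψ h1 h2 v hv hvi x]
  have c1 : ContDiff ℝ (⊤ : ℕ∞) (fun z => ψ (x - z)) := h1.comp (contDiff_const.sub contDiff_id)
  have c2 : HasCompactSupport (fun z => ψ (x - z)) :=
    h2.comp_homeomorph (Homeomorph.subLeft x)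
  have := hD _ c1 c2
  unfold cv
  simp_rw [mul_comm (ψ _)]
  rw [← this]
  congr 1; ext z
  rw [fracLap_eq d hd s hs Cds _ c1 c2]
  congr 2
  unfold symL secD
  congr 1; ext h
  beta_reduce
  rw [show x - (z + h) = x - z - h by abel, show x - (z - h) = x - z + h by abel]
  ring

lemma part3 (d : ℕ) (hd : 1 ≤ d) (s : ℝ) (hs : s ∈ Set.Ioo (0:ℝ) 1) (Cds : ℝ) (ψ : Ed d → ℝ)
    (h1 : ContDiff ℝ (⊤ : ℕ∞) ψ) (h2 : HasCompactSupport ψ) (v V : Ed d → ℝ) (hv : Measurable v)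
    (hvi : Integrable (fun z => v z * wt d s z)) (hV : Measurable V)
    (hVi : Integrable (fun z => V z * wt d s z)) (hD : IsDistFracLap d s Cds v V) :
    IsDistFracLap d s Cds (cv d ψ v) (cv d ψ V) := by
  intro φ p1 p2
  set ψ' : Ed d → ℝ := fun z => ψ (-z)
  have c1 : Continuous ψ' := h1.continuous.comp continuous_neg
  have c2 : HasCompactSupport ψ' := h2.comp_homeomorph (Homeomorph.neg (Ed d))
  have ci : Integrable (fun z => ψ' z * wt d s z) :=
    (c1.mul (wt_cont d s)).integrable_of_hasCompactSupport c2.mul_right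
  have q1 : ContDiff ℝ (⊤ : ℕ∞) (cv d φ ψ') := cv_contDiff d s φ p1 p2 ψ' ci
  have q2 : HasCompactSupport (cv d φ ψ') := by
    have := c2.convolution (ContinuousLinearMap.mul ℝ ℝ) p2 (μ := volume)
    have e : cv d φ ψ' = convolution ψ' φ (ContinuousLinearMap.mul ℝ ℝ) volume := by
      ext x
      unfold cv convolution
      simp [mul_comm]
    rw [e]
    exact this
  have flip : ∀ (g : Ed d → ℝ) (y : Ed d), ∫ z, ψ' z * g (y - z) = ∫ x, ψ (x - y) * g x := by
    intro g y
    rw [← integral_sub_left_eq_self _ volume y]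
    congr 1; ext z
    simp [ψ']
  obtain ⟨K, hK, hb⟩ := symL_bound d hd s hs φ p1 p2
  have sc := symL_cont d hd s hs φ p1 p2
  have I1 := prod_int d s hs.1 ψ h1.continuous h2 v (fun x => Cds * symL d s φ x) hv hvi
    (by have := sc.measurable; fun_prop) (|Cds| * K) (fun y => by
      rw [abs_mul, mul_assoc]; gcongr; exact hb y)
  obtain ⟨B, hB⟩ := (p2.mul_right (f' := fun x => (wt d s x)⁻¹)).exists_bound_of_continuous
    (p1.continuous.mul ((wt_cont d s).inv₀ (fun x => (wt_pos d s x).ne')))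
  have I2 := prod_int d s hs.1 ψ h1.continuous h2 V φ hV hVi p1.continuous.measurable B
    (fun y => by
      have := hB y
      have hw := wt_pos d s y
      simp only [Real.norm_eq_abs, Pi.mul_apply, abs_mul, abs_inv, abs_of_pos hw] at this
      rwa [← div_eq_mul_inv, div_le_iff₀ hw] at this)
  calc ∫ x, cv d ψ v x * fracLap d s Cds φ x
      = ∫ x, ∫ y, ψ (x - y) * v y * (Cds * symL d s φ x) := by
        congr 1; ext x
        rw [fracLap_eq d hd s hs Cds φ p1 p2, integral_mul_const]; rfl
    _ = ∫ y, ∫ x, ψ (x - y) * v y * (Cds * symL d s φ x) := integral_integral_swap I1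
    _ = ∫ y, v y * fracLap d s Cds (cv d φ ψ') y := by
        congr 1; ext y
        rw [fracLap_cv d hd s hs Cds φ p1 p2 ψ' c1.measurable ci, 
          flip (fun x => Cds * symL d s φ x) y, ← integral_const_mul]
        congr 1; ext x; ring
    _ = ∫ y, V y * cv d φ ψ' y := hD _ q1 q2
    _ = ∫ y, ∫ x, ψ (x - y) * V y * φ x := by
        congr 1; ext y
        unfold cv
        simp_rw [mul_comm (φ _)]
        rw [flip φ y, ← integral_const_mul]
        congr 1; ext x; ring
    _ = ∫ x, ∫ y, ψ (x - y) * V y * φ x := (integral_integral_swap I2).symm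
    _ = _ := by
        congr 1; ext x
        rw [integral_mul_const]; rfl
end

open MeasureTheory Filter Metric Set
open scoped Topology ENNReal

noncomputable section

lemma rpow_between (A t b : ℝ) (hA : 1 ≤ A) (h1 : A⁻¹ ≤ t) (h2 : t ≤ A) :
    A ^ (-|b|) ≤ t ^ b ∧ t ^ b ≤ A ^ |b| := by
  have hA0 : 0 < A := by linarith
  have ht : 0 < t := (inv_pos.2 hA0).trans_le h1
  have l1 : Real.log t ≤ Real.log A := Real.log_le_log ht h2
  have l2 : -Real.log A ≤ Real.log t := by
    rw [← Real.log_inv]; exact Real.log_le_log (inv_pos.2 hA0) h1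
  have l3 : |Real.log t * b| ≤ Real.log A * |b| := by
    rw [abs_mul]; gcongr; exact abs_le.2 ⟨l2, l1⟩
  rw [abs_le] at l3
  rw [Real.rpow_def_of_pos hA0, Real.rpow_def_of_pos hA0, Real.rpow_def_of_pos ht]
  constructor <;> apply Real.exp_le_exp.2 <;> linarith

def rr (d : ℕ) (γ₀ γ : ℝ) (x : Ed d) : ℝ := ‖x‖ ^ (-γ₀) * (1 + ‖x‖) ^ (γ₀ - γ)

lemma rr_pos (d : ℕ) (γ₀ γ : ℝ) (x : Ed d) (hx : x ≠ 0) : 0 < rr d γ₀ γ x := by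
  have := norm_pos_iff.2 hx
  unfold rr; positivity

lemma ae_ne_zero (d : ℕ) (hd : 1 ≤ d) : ∀ᵐ x : Ed d, x ≠ 0 := by
  have : Nontrivial (Ed d) := by
    have : Nonempty (Fin d) := ⟨⟨0, hd⟩⟩
    infer_instance
  exact compl_mem_ae_iff.2 (measure_singleton (0 : Ed d))

lemma rho_cmp (d : ℕ) (hd : 1 ≤ d) (ρ : Ed d → ℝ) (c C γ₀ γ : ℝ) (hw : TwoPowerWeight d ρ c C γ₀ γ) :
    ∃ a A : ℝ, 0 < a ∧ 0 < A ∧ ∀ᵐ x : Ed d, a * rr d γ₀ γ x ≤ ρ x ∧ ρ x ≤ A * rr d γ₀ γ x := by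
  obtain ⟨hc, hcC, h1, h2⟩ := hw
  have hC : 0 < C := hc.trans hcC
  set k := |γ₀ - γ|
  refine ⟨c * 2 ^ (-k), C * 2 ^ k, by positivity, by positivity, ?_⟩
  filter_upwards [ae_ne_zero d hd, h1, h2] with x hx h1 h2
  have hp := norm_pos_iff.2 hx
  have e2 : (2:ℝ) ^ (-k) * 2 ^ k = 1 := by rw [← Real.rpow_add (by norm_num)]; simp
  have p1 : (0:ℝ) < 2 ^ k := by positivity
  have p2 : (0:ℝ) < 2 ^ (-k) := by positivity
  have key : ∀ (X t : ℝ), 0 < X → rr d γ₀ γ x = X * t → 2 ^ (-k) ≤ t → t ≤ 2 ^ k →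
      (c * X ≤ ρ x ∧ ρ x ≤ C * X) →
      c * 2 ^ (-k) * rr d γ₀ γ x ≤ ρ x ∧ ρ x ≤ C * 2 ^ k * rr d γ₀ γ x := by
    intro X t hX he ht1 ht2 hh
    rw [he]
    have a1 : 2 ^ (-k) * t ≤ 1 := by rw [← e2]; gcongr
    have a2 : 1 ≤ 2 ^ k * t := by rw [← e2, mul_comm]; gcongr
    constructor
    · refine le_trans ?_ hh.1
      calc _ = (c * X) * (2 ^ (-k) * t) := by ring
        _ ≤ (c * X) * 1 := by gcongr
        _ = _ := by ring
    · refine hh.2.trans ?_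
      calc _ = (C * X) * 1 := by ring
        _ ≤ (C * X) * (2 ^ k * t) := by gcongr
        _ = _ := by ring
  rcases le_or_gt ‖x‖ 1 with hx1 | hx1
  · obtain ⟨b1, b2⟩ := rpow_between 2 (1 + ‖x‖) (γ₀ - γ) (by norm_num) (by linarith) (by linarith)
    exact key (‖x‖ ^ (-γ₀)) _ (by positivity) rfl b1 b2 (h1 hx1)
  · obtain ⟨b1, b2⟩ := rpow_between 2 ((1 + ‖x‖) / ‖x‖) (γ₀ - γ) (by norm_num)
      (by rw [le_div_iff₀ hp]; linarith) (by rw [div_le_iff₀ hp]; linarith)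
    refine key (‖x‖ ^ (-γ)) _ (by positivity) ?_ b1 b2 (h2 hx1)
    unfold rr
    rw [Real.div_rpow (by positivity) hp.le, div_eq_mul_inv, ← Real.rpow_neg hp.le,
      mul_comm ((1 + ‖x‖) ^ _), ← mul_assoc, ← Real.rpow_add hp]
    congr 2; ring

lemma young_w (p q t w r : ℝ) (h : p.HolderConjugate q) (ht : 0 ≤ t) (hw : 0 ≤ w) (hr : 0 < r) :
    t * w ≤ t ^ p * r + w ^ q * r ^ (-(q - 1)) := by
  have hp := h.lt
  have hq := h.symm.lt
  have := Real.young_inequality_of_nonneg (a := t * r ^ (1 / p)) (b := r ^ (-(1 / p)) * w)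
    (by positivity) (by positivity) h
  have e0 : r ^ (1 / p) * r ^ (-(1 / p)) = 1 := by rw [← Real.rpow_add hr]; simp
  have e1 : t * r ^ (1 / p) * (r ^ (-(1 / p)) * w) = t * w := by
    calc _ = t * w * (r ^ (1 / p) * r ^ (-(1 / p))) := by ring
      _ = _ := by rw [e0, mul_one]
  have e2 : (t * r ^ (1 / p)) ^ p = t ^ p * r := by
    rw [Real.mul_rpow ht (by positivity), ← Real.rpow_mul hr.le, one_div_mul_cancel (by linarith),
      Real.rpow_one]
  have e3 : (r ^ (-(1 / p)) * w) ^ q = w ^ q * r ^ (-(q - 1)) := by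
    rw [Real.mul_rpow (by positivity) hw, ← Real.rpow_mul hr.le, mul_comm]
    congr 2
    have := h.sub_one_mul_conj
    have h3 := h.symm.sub_one_mul_conj
    field_simp
    linarith
  rw [e1, e2, e3] at this
  refine this.trans (add_le_add ?_ ?_)
  · exact div_le_self (by positivity) hp.le
  · exact div_le_self (by positivity) hq.le

lemma rr_wt_int (d : ℕ) (hd : 1 ≤ d) (γ₀ b : ℝ) (h0 : 0 ≤ γ₀) (h1 : γ₀ < d) (hb : d < γ₀ + b) :
    Integrable (fun x : Ed d => ‖x‖ ^ (-γ₀) * (1 + ‖x‖) ^ (-b)) := by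
  have hm : Measurable (fun x : Ed d => ‖x‖ ^ (-γ₀) * (1 + ‖x‖) ^ (-b)) := by fun_prop
  have e : (univ : Set (Ed d)) = closedBall 0 1 ∪ {h | 1 ≤ ‖h‖} := by
    ext h; simp [le_total]
  rw [← integrableOn_univ, e]
  refine IntegrableOn.union ?_ ?_
  · have := ((pow_loc d hd γ₀ h1).integrableOn_isCompact
      (isCompact_closedBall (0 : Ed d) 1)).mul_const (2 ^ |-b|)
    refine Integrable.mono' this hm.aestronglyMeasurable ?_
    filter_upwards [ae_restrict_mem measurableSet_closedBall] with x hx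
    simp only [mem_closedBall, dist_zero_right] at hx
    rw [Real.norm_of_nonneg (by positivity)]
    gcongr
    exact (rpow_between 2 (1 + ‖x‖) (-b) (by norm_num) (by linarith [norm_nonneg x])
      (by linarith)).2
  · have : IntegrableOn (fun x : Ed d => 2 ^ γ₀ * (1 + ‖x‖) ^ (-(γ₀ + b))) {h | 1 ≤ ‖h‖} :=
      ((integrable_one_add_norm (by simpa using hb)).const_mul _).integrableOn
    refine Integrable.mono' this hm.aestronglyMeasurable ?_
    filter_upwards [ae_restrict_mem (ms_tail d 1)] with x hx
    have hx : 1 ≤ ‖x‖ := hx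
    have hp : 0 < ‖x‖ := by linarith
    rw [Real.norm_of_nonneg (by positivity), neg_add, Real.rpow_add (by positivity), ← mul_assoc]
    gcongr
    rw [Real.rpow_neg hp.le, Real.rpow_neg (by positivity), ← div_eq_mul_inv, inv_eq_one_div,
      div_le_div_iff₀ (by positivity) (by positivity), one_mul, ← Real.mul_rpow (by norm_num) hp.le]
    gcongr
    linarith

lemma rho_wt_int (d : ℕ) (hd : 1 ≤ d) (s : ℝ) (hs : 0 < s) (p : ℝ) (hp : 1 < p)
    (ρ : Ed d → ℝ) (hρpos : ∀ x, 0 < ρ x) (hρm : Measurable ρ)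
    (c C γ₀ γ : ℝ) (hw : TwoPowerWeight d ρ c C γ₀ γ)
    (hγ₀ : γ₀ ∈ Set.Ico (0:ℝ) d) (hγ : 0 ≤ γ) :
    Integrable (fun x => wt d s x ^ p * ρ x) := by
  obtain ⟨a, A, ha, hA, h⟩ := rho_cmp d hd ρ c C γ₀ γ hw
  have hwm := (wt_cont d s).measurable
  refine Integrable.mono' ((rr_wt_int d hd γ₀ (γ - γ₀ + ((d : ℝ) + 2 * s) * p) hγ₀.1 hγ₀.2
    (by have : (1:ℝ) ≤ d := by exact_mod_cast hd
        nlinarith)).const_mul A) (Measurable.aestronglyMeasurable (by fun_prop)) ?_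
  filter_upwards [h] with x hx
  have := wt_pos d s x
  have := hρpos x
  rw [Real.norm_of_nonneg (by positivity)]
  calc _ ≤ wt d s x ^ p * (A * rr d γ₀ γ x) := by gcongr; exact hx.2
    _ = _ := by
      unfold wt rr
      rw [← Real.rpow_mul (by positivity)]
      rw [show -(γ - γ₀ + ((d : ℝ) + 2 * s) * p) = (γ₀ - γ) + (-((d : ℝ) + 2 * s) * p) by ring,
        Real.rpow_add (by positivity)]
      ring

lemma rhoinv_wt_int (d : ℕ) (hd : 1 ≤ d) (s : ℝ) (hs : 0 < s) (p : ℝ) (hp : 1 < p)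
    (ρ : Ed d → ℝ) (hρpos : ∀ x, 0 < ρ x) (hρm : Measurable ρ)
    (c C γ₀ γ : ℝ) (hw : TwoPowerWeight d ρ c C γ₀ γ)
    (hγ₀ : γ₀ ∈ Set.Ico (0:ℝ) d) (hγ : γ ∈ Set.Icc (0:ℝ) ((d:ℝ) + p * s)) :
    Integrable (fun x => wt d s x ^ (p / (p - 1)) * ρ x ^ (-(p / (p - 1) - 1))) := by
  obtain ⟨a, A, ha, hA, h⟩ := rho_cmp d hd ρ c C γ₀ γ hw
  have hwm := (wt_cont d s).measurable
  have hp1 : 0 < p - 1 := by linarith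
  set q := p / (p - 1) with hq
  have hq1 : q - 1 = 1 / (p - 1) := by rw [hq]; field_simp; ring
  have hq0 : 0 < q - 1 := by rw [hq1]; positivity
  have hr : (d : ℝ) < ((d : ℝ) + 2 * s) * q - γ * (q - 1) := by
    rw [hq1, hq]
    rw [mul_div_assoc', mul_one_div, ← sub_div, lt_div_iff₀ hp1]
    have := hγ.2
    have : 0 < p * s := by positivity
    nlinarith
  have := integrable_one_add_norm (μ := (volume : Measure (Ed d)))
    (r := ((d : ℝ) + 2 * s) * q - γ * (q - 1)) (by simpa using hr)
  refine Integrable.mono' (this.const_mul (a ^ (-(q - 1))))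
    (Measurable.aestronglyMeasurable (by fun_prop)) ?_
  filter_upwards [h, ae_ne_zero d hd] with x hx hx0
  have hwp := wt_pos d s x
  have hρx := hρpos x
  have hn := norm_pos_iff.2 hx0
  have hrr := rr_pos d γ₀ γ x hx0
  rw [Real.norm_of_nonneg (by positivity)]
  have low : (1 + ‖x‖) ^ (-γ) ≤ rr d γ₀ γ x := by
    unfold rr
    rw [show -γ = -γ₀ + (γ₀ - γ) by ring, Real.rpow_add (by positivity)]
    gcongr ?_ * _
    exact Real.rpow_le_rpow_of_nonpos hn (by linarith) (by linarith [hγ₀.1])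
  calc _ ≤ wt d s x ^ q * (a * (1 + ‖x‖) ^ (-γ)) ^ (-(q - 1)) := by
        refine mul_le_mul_of_nonneg_left ?_ (by positivity)
        refine Real.rpow_le_rpow_of_nonpos (by positivity) ?_ (by linarith)
        refine le_trans ?_ hx.1
        gcongr
    _ = _ := by
      unfold wt
      rw [Real.mul_rpow ha.le (by positivity), ← Real.rpow_mul (by positivity),
        ← Real.rpow_mul (by positivity), mul_left_comm, ← Real.rpow_add (by positivity)]
      congr 2; ring

lemma v_wt_int (d : ℕ) (hd : 1 ≤ d) (s : ℝ) (hs : 0 < s) (p : ℝ) (hp : 1 < p)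
    (ρ : Ed d → ℝ) (hρpos : ∀ x, 0 < ρ x) (hρm : Measurable ρ)
    (c C γ₀ γ : ℝ) (hw : TwoPowerWeight d ρ c C γ₀ γ)
    (hγ₀ : γ₀ ∈ Set.Ico (0:ℝ) d) (hγ : γ ∈ Set.Icc (0:ℝ) ((d:ℝ) + p * s))
    (v : Ed d → ℝ) (hv : MemWLp d p ρ v) : Integrable (fun x => v x * wt d s x) := by
  refine Integrable.mono' (hv.2.add (rhoinv_wt_int d hd s hs p hp ρ hρpos hρm c C γ₀ γ hw hγ₀ hγ))
    (hv.1.mul (wt_cont d s).aestronglyMeasurable) (Eventually.of_forall fun x => ?_)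
  rw [norm_mul, Real.norm_of_nonneg (wt_pos d s x).le]
  exact young_w p _ _ _ _ (Real.HolderConjugate.conjExponent hp) (abs_nonneg _) (wt_pos d s x).le
    (hρpos x)

lemma V_wt_int (d : ℕ) (hd : 1 ≤ d) (s : ℝ) (hs : 0 < s) (p : ℝ) (hp : 1 < p)
    (ρ : Ed d → ℝ) (hρpos : ∀ x, 0 < ρ x) (hρm : Measurable ρ)
    (c C γ₀ γ : ℝ) (hw : TwoPowerWeight d ρ c C γ₀ γ)
    (hγ₀ : γ₀ ∈ Set.Ico (0:ℝ) d) (hγ : γ ∈ Set.Icc (0:ℝ) ((d:ℝ) + p * s))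
    (V : Ed d → ℝ) (hV : MemWLp d (p / (p - 1)) (fun x => ρ x ^ (-(p / (p - 1) - 1))) V) :
    Integrable (fun x => V x * wt d s x) := by
  refine Integrable.mono' ((rho_wt_int d hd s hs p hp ρ hρpos hρm c C γ₀ γ hw hγ₀ hγ.1).add hV.2)
    (hV.1.mul (wt_cont d s).aestronglyMeasurable) (Eventually.of_forall fun x => ?_)
  rw [norm_mul, Real.norm_of_nonneg (wt_pos d s x).le, mul_comm]
  exact young_w p _ _ _ _ (Real.HolderConjugate.conjExponent hp) (wt_pos d s x).le (abs_nonneg _) 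
    (hρpos x)

/-- the probability measure with density `η` -/
def mu (d : ℕ) (η : Ed d → ℝ) : Measure (Ed d) := volume.withDensity fun z => ENNReal.ofReal (η z)

lemma moll_cs (d : ℕ) (η : Ed d → ℝ) (hη : IsMollifier d η) : HasCompactSupport η :=
  (isCompact_closedBall (0 : Ed d) 1).of_isClosed_subset (isClosed_tsupport η) hη.2.2.1

lemma mu_prob (d : ℕ) (η : Ed d → ℝ) (hη : IsMollifier d η) : IsProbabilityMeasure (mu d η) := by
  constructor
  have hi : Integrable η := hη.1.continuous.integrable_of_hasCompactSupport (moll_cs d η hη)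
  rw [mu, withDensity_apply _ MeasurableSet.univ, Measure.restrict_univ,
    ← ofReal_integral_eq_lintegral_ofReal hi (Eventually.of_forall hη.2.1), hη.2.2.2]
  simp

lemma eta_zero (d : ℕ) (η : Ed d → ℝ) (hη : IsMollifier d η) (z : Ed d) (hz : 1 < ‖z‖) :
    η z = 0 := by
  by_contra h
  have := hη.2.2.1 (subset_tsupport η h)
  simp at this
  linarith

lemma mu_ball (d : ℕ) (η : Ed d → ℝ) (hη : IsMollifier d η) : ∀ᵐ z ∂(mu d η), ‖z‖ ≤ 1 := by
  have hm := hη.1.continuous.measurable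
  rw [mu, ae_withDensity_iff (by fun_prop)]
  refine Eventually.of_forall fun z hz => ?_
  by_contra h
  exact hz (by rw [eta_zero d η hη z (by linarith)]; simp)

lemma A1_base (d : ℕ) (hd : 1 ≤ d) (η : Ed d → ℝ) (hη : IsMollifier d η) (γ₀ : ℝ)
    (hγ₀ : γ₀ ∈ Set.Ico (0:ℝ) d) : ∃ K : ℝ, 0 ≤ K ∧ ∀ x : Ed d, x ≠ 0 →
      ∫⁻ z, ENNReal.ofReal (‖x - z‖ ^ (-γ₀)) ∂(mu d η) ≤ ENNReal.ofReal (K * ‖x‖ ^ (-γ₀)) := by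
  have := mu_prob d η hη
  have hm := hη.1.continuous.measurable
  obtain ⟨M, hM⟩ := (moll_cs d η hη).exists_bound_of_continuous hη.1.continuous
  have hM0 : 0 ≤ M := (norm_nonneg _).trans (hM 0)
  have hJ := (pow_loc d hd γ₀ hγ₀.2).integrableOn_isCompact (isCompact_closedBall (0 : Ed d) 3)
  obtain ⟨J, hJd⟩ : ∃ J, J = ∫ y in closedBall (0 : Ed d) 3, ‖y‖ ^ (-γ₀) := ⟨_, rfl⟩
  have hJ0 : 0 ≤ J := by
    rw [hJd]
    exact integral_nonneg fun y => Real.rpow_nonneg (norm_nonneg _) _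
  refine ⟨(M * J + 1) * 2 ^ γ₀, by positivity, fun x hx => ?_⟩
  have hp := norm_pos_iff.2 hx
  have eq2 : (‖x‖ / 2) ^ (-γ₀) = 2 ^ γ₀ * ‖x‖ ^ (-γ₀) := by
    rw [Real.div_rpow hp.le (by norm_num), Real.rpow_neg (by norm_num : (0:ℝ) ≤ 2), div_inv_eq_mul,
      mul_comm]
  have hMJ : 0 ≤ M * J := by positivity
  rcases le_or_gt 2 ‖x‖ with h | h
  · calc _ ≤ ∫⁻ z, ENNReal.ofReal ((‖x‖ / 2) ^ (-γ₀)) ∂(mu d η) := by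
          refine lintegral_mono_ae ?_
          filter_upwards [mu_ball d η hη] with z hz
          apply ENNReal.ofReal_le_ofReal
          refine Real.rpow_le_rpow_of_nonpos (by positivity) ?_ (by linarith [hγ₀.1])
          have := norm_sub_norm_le x z
          linarith
      _ = ENNReal.ofReal ((‖x‖ / 2) ^ (-γ₀)) := by simp
      _ ≤ _ := by
          apply ENNReal.ofReal_le_ofReal
          rw [eq2, mul_assoc]
          have : 0 ≤ 2 ^ γ₀ * ‖x‖ ^ (-γ₀) := by positivity
          nlinarith
  · calc _ = ∫⁻ z, ENNReal.ofReal (η z) * ENNReal.ofReal (‖x - z‖ ^ (-γ₀)) := by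
          rw [mu, lintegral_withDensity_eq_lintegral_mul _ (by fun_prop) (by fun_prop)]
          rfl
      _ ≤ ∫⁻ z, ENNReal.ofReal M *
            (indicator (closedBall (0 : Ed d) 3) (fun y => ENNReal.ofReal (‖y‖ ^ (-γ₀)))) (x - z) := by
          refine lintegral_mono fun z => ?_
          rcases le_or_gt ‖z‖ 1 with hz | hz
          · rw [indicator_of_mem]
            · gcongr
              exact (le_abs_self _).trans (hM z)
            · simp only [mem_closedBall, dist_zero_right]
              have := norm_sub_le x z
              linarith
          · simp [eta_zero d η hη z hz]
      _ = ENNReal.ofReal M * ∫⁻ y in closedBall (0 : Ed d) 3, ENNReal.ofReal (‖y‖ ^ (-γ₀)) := by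
          rw [lintegral_const_mul]
          · rw [← lintegral_indicator measurableSet_closedBall, lintegral_sub_left_eq_self (μ := volume)
              (fun y => (closedBall (0 : Ed d) 3).indicator (fun y => ENNReal.ofReal (‖y‖ ^ (-γ₀))) y)]
          · exact (Measurable.indicator (by fun_prop) measurableSet_closedBall).comp (by fun_prop)
      _ = ENNReal.ofReal (M * J) := by
          rw [← ofReal_integral_eq_lintegral_ofReal hJ (Eventually.of_forall fun y => by positivity),
            ENNReal.ofReal_mul hM0, hJd]
      _ ≤ _ := by
          apply ENNReal.ofReal_le_ofReal
          rw [mul_assoc, ← eq2]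
          have : 1 ≤ (‖x‖ / 2) ^ (-γ₀) := by
            have := Real.rpow_le_rpow_of_nonpos (z := -γ₀) (by positivity) (by linarith : ‖x‖ / 2 ≤ 1)
              (by linarith [hγ₀.1])
            simpa using this
          nlinarith

lemma A1 (d : ℕ) (hd : 1 ≤ d) (η : Ed d → ℝ) (hη : IsMollifier d η)
    (ρ : Ed d → ℝ) (c C γ₀ γ : ℝ) (hw : TwoPowerWeight d ρ c C γ₀ γ)
    (hγ₀ : γ₀ ∈ Set.Ico (0:ℝ) d) (ε₀ : ℝ) (hε₀ : 0 < ε₀) :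
    ∃ K : ℝ, 0 ≤ K ∧ ∀ ε : ℝ, ε ≠ 0 → |ε| ≤ ε₀ → ∀ᵐ x : Ed d,
      ∫⁻ z, ENNReal.ofReal (ρ (x - ε • z)) ∂(mu d η) ≤ ENNReal.ofReal (K * ρ x) := by
  obtain ⟨a, A, ha, hA, h⟩ := rho_cmp d hd ρ c C γ₀ γ hw
  obtain ⟨K, hK, hb⟩ := A1_base d hd η hη γ₀ hγ₀
  set k := |γ₀ - γ|
  refine ⟨A * (1 + ε₀) ^ k * K * a⁻¹, by positivity, fun ε hε hεε => ?_⟩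
  filter_upwards [h, ae_ne_zero d hd] with x hx hx0
  have hp := norm_pos_iff.2 hx0
  have hae : 0 < |ε| := abs_pos.2 hε
  have q : ∀ᵐ z ∂(mu d η), ρ (x - ε • z) ≤ A * rr d γ₀ γ (x - ε • z) := by
    refine (withDensity_absolutelyContinuous _ _).ae_le ?_
    have q1 := (Measure.quasiMeasurePreserving_smul (volume : Measure (Ed d)) hε)
    have q2 : Measure.QuasiMeasurePreserving (fun y : Ed d => x - y) volume volume :=
      (Measure.measurePreserving_sub_left volume x).quasiMeasurePreserving
    exact (q2.comp q1).ae (h.mono fun y hy => hy.2)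
  calc _ ≤ ∫⁻ z, ENNReal.ofReal (A * (1 + ε₀) ^ k * (1 + ‖x‖) ^ (γ₀ - γ) * |ε| ^ (-γ₀)) *
          ENNReal.ofReal (‖ε⁻¹ • x - z‖ ^ (-γ₀)) ∂(mu d η) := by
        refine lintegral_mono_ae ?_
        filter_upwards [q, mu_ball d η hη] with z hz hz1
        rw [← ENNReal.ofReal_mul (by positivity)]
        apply ENNReal.ofReal_le_ofReal
        refine hz.trans ?_
        unfold rr
        have e : ‖x - ε • z‖ = |ε| * ‖ε⁻¹ • x - z‖ := by
          rw [← Real.norm_eq_abs, ← norm_smul, smul_sub, smul_inv_smul₀ hε]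
        have hez : ‖ε • z‖ ≤ ε₀ := by
          rw [norm_smul, Real.norm_eq_abs]
          nlinarith [norm_nonneg z]
        have mod : (1 + ‖x - ε • z‖) ^ (γ₀ - γ) ≤ (1 + ε₀) ^ k * (1 + ‖x‖) ^ (γ₀ - γ) := by
          have t1 : ‖x - ε • z‖ ≤ ‖x‖ + ε₀ := (norm_sub_le _ _).trans (by linarith)
          have t2 : ‖x‖ ≤ ‖x - ε • z‖ + ε₀ := by
            have := norm_sub_norm_le x (ε • z)
            linarith
          have hy := norm_nonneg (x - ε • z)
          have := (rpow_between (1 + ε₀) ((1 + ‖x - ε • z‖) / (1 + ‖x‖)) (γ₀ - γ) (by linarith)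
            (by rw [le_div_iff₀ (by positivity), inv_mul_le_iff₀ (by positivity)]; nlinarith)
            (by rw [div_le_iff₀ (by positivity)]; nlinarith)).2
          rwa [Real.div_rpow (by positivity) (by positivity), div_le_iff₀ (by positivity)] at this
        calc A * (‖x - ε • z‖ ^ (-γ₀) * (1 + ‖x - ε • z‖) ^ (γ₀ - γ))
            ≤ A * (‖x - ε • z‖ ^ (-γ₀) * ((1 + ε₀) ^ k * (1 + ‖x‖) ^ (γ₀ - γ))) := by gcongr
          _ = _ := by
            rw [e, Real.mul_rpow hae.le (by positivity)]; ring
    _ = ENNReal.ofReal (A * (1 + ε₀) ^ k * (1 + ‖x‖) ^ (γ₀ - γ) * |ε| ^ (-γ₀)) *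
          ∫⁻ z, ENNReal.ofReal (‖ε⁻¹ • x - z‖ ^ (-γ₀)) ∂(mu d η) := by
        rw [lintegral_const_mul _ (by fun_prop)]
    _ ≤ ENNReal.ofReal (A * (1 + ε₀) ^ k * (1 + ‖x‖) ^ (γ₀ - γ) * |ε| ^ (-γ₀)) *
          ENNReal.ofReal (K * ‖ε⁻¹ • x‖ ^ (-γ₀)) := by
        gcongr
        exact hb _ (smul_ne_zero (inv_ne_zero hε) hx0)
    _ = ENNReal.ofReal (A * (1 + ε₀) ^ k * K * rr d γ₀ γ x) := by
        rw [← ENNReal.ofReal_mul (by positivity)]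
        congr 1
        rw [norm_smul, Real.norm_eq_abs, abs_inv, Real.mul_rpow (by positivity) hp.le,
          Real.inv_rpow hae.le]
        have : |ε| ^ (-γ₀) ≠ 0 := by positivity
        unfold rr
        field_simp
    _ ≤ _ := by
        apply ENNReal.ofReal_le_ofReal
        have : rr d γ₀ γ x ≤ a⁻¹ * ρ x := by
          rw [inv_mul_eq_div, le_div_iff₀ ha, mul_comm]; exact hx.1
        calc _ ≤ A * (1 + ε₀) ^ k * K * (a⁻¹ * ρ x) := by gcongr
          _ = _ := by ring
end

open MeasureTheory Filter Metric Set
open scoped Topology ENNReal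

noncomputable section

lemma mollify_eq (d : ℕ) (η : Ed d → ℝ) (hη : IsMollifier d η) (ε : ℝ) (hε : 0 < ε) (f : Ed d → ℝ)
    (x : Ed d) : mollify d η ε f x = ∫ z, f (x - ε • z) ∂(mu d η) := by
  have hm := hη.1.continuous.measurable
  rw [mu, integral_withDensity_eq_integral_toReal_smul (by fun_prop) (by simp)]
  have e1 : ∀ z, (ENNReal.ofReal (η z)).toReal • f (x - ε • z) = η z * f (x - ε • z) := fun z => by
    rw [ENNReal.toReal_ofReal (hη.2.1 z), smul_eq_mul]
  simp_rw [e1]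
  unfold mollify
  rw [← integral_sub_left_eq_self (fun y => (ε ^ (-(d:ℝ)) * η (ε⁻¹ • (x - y))) * f y) volume x]
  have e2 : ∀ y, (ε ^ (-(d:ℝ)) * η (ε⁻¹ • (x - (x - y)))) * f (x - y)
      = ε ^ (-(d:ℝ)) * (fun z => η z * f (x - ε • z)) (ε⁻¹ • y) := fun y => by
    simp only [sub_sub_cancel, smul_inv_smul₀ hε.ne']; ring
  rw [integral_congr_ae (Eventually.of_forall e2), integral_const_mul, Measure.integral_comp_inv_smul_of_nonneg volume (fun z => η z * f (x - ε • z)) hε.le]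
  rw [finrank_euclideanSpace_fin, smul_eq_mul, ← mul_assoc, Real.rpow_neg hε.le, Real.rpow_natCast,
    inv_mul_cancel₀ (by positivity), one_mul]

def nu (d : ℕ) (σ : Ed d → ℝ) : Measure (Ed d) := volume.withDensity fun x => ENNReal.ofReal (σ x)

lemma jensen {α : Type*} [MeasurableSpace α] (m : Measure α) [IsProbabilityMeasure m] (p : ℝ) (hp : 1 < p)
    (g : α → ℝ≥0∞) (hg : Measurable g) : (∫⁻ z, g z ∂m) ^ p ≤ ∫⁻ z, g z ^ p ∂m := by
  have h := ENNReal.lintegral_mul_le_Lp_mul_Lq m (Real.HolderConjugate.conjExponent hp) hg.aemeasurable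
    (aemeasurable_const (b := (1:ℝ≥0∞)))
  simp only [Pi.mul_apply, mul_one, ENNReal.one_rpow, lintegral_const, measure_univ] at h
  calc _ ≤ ((∫⁻ z, g z ^ p ∂m) ^ (1 / p)) ^ p := by gcongr
    _ = _ := by rw [← ENNReal.rpow_mul, one_div_mul_cancel (by linarith), ENNReal.rpow_one]

lemma holder_w {α : Type*} [MeasurableSpace α] (m : Measure α) (p : ℝ) (hp : 1 < p)
    (g P : α → ℝ≥0∞) (hg : Measurable g) (hP : Measurable P) (h0 : ∀ z, P z ≠ 0) (ht : ∀ z, P z ≠ ⊤) :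
    (∫⁻ z, g z ∂m) ^ (p / (p - 1)) ≤
      (∫⁻ z, g z ^ (p / (p - 1)) * P z ^ (-(p / (p - 1) - 1)) ∂m) * (∫⁻ z, P z ∂m) ^ (p / (p - 1) - 1) := by
  have hc : (p / (p - 1)).HolderConjugate p := (Real.HolderConjugate.conjExponent hp).symm
  have hp1 : 0 < p - 1 := by linarith
  obtain ⟨q, hq⟩ : ∃ q, q = p / (p - 1) := ⟨_, rfl⟩
  rw [← hq] at hc ⊢
  have hqp : q / p = q - 1 := by rw [hq]; field_simp; ring
  have hq0 : 0 < q := hc.pos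
  have h := ENNReal.lintegral_mul_le_Lp_mul_Lq m hc (f := fun z => g z * P z ^ (-(1 / p)))
    (g := fun z => P z ^ (1 / p)) (by fun_prop) (by fun_prop)
  have e1 : ∀ z, ((fun z => g z * P z ^ (-(1 / p))) * fun z => P z ^ (1 / p)) z = g z := fun z => by
    simp only [Pi.mul_apply]
    rw [mul_assoc, ← ENNReal.rpow_add _ _ (h0 z) (ht z), neg_add_cancel, ENNReal.rpow_zero, mul_one]
  have e2 : ∀ z, (g z * P z ^ (-(1 / p))) ^ q = g z ^ q * P z ^ (-(q - 1)) := fun z => by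
    rw [ENNReal.mul_rpow_of_nonneg _ _ hq0.le, ← ENNReal.rpow_mul, ← hqp]
    congr 2; ring
  have e3 : ∀ z, (P z ^ (1 / p)) ^ p = P z := fun z => by
    rw [← ENNReal.rpow_mul, one_div_mul_cancel (by linarith), ENNReal.rpow_one]
  simp_rw [e1, e2, e3] at h
  calc _ ≤ ((∫⁻ z, g z ^ q * P z ^ (-(q - 1)) ∂m) ^ (1 / q) * (∫⁻ z, P z ∂m) ^ (1 / p)) ^ q := by gcongr
    _ = _ := by
      rw [ENNReal.mul_rpow_of_nonneg _ _ hq0.le, ← ENNReal.rpow_mul, one_div_mul_cancel hq0.ne',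
        ENNReal.rpow_one, ← ENNReal.rpow_mul, ← hqp]
      congr 2; ring

lemma nu_lint (d : ℕ) (σ : Ed d → ℝ) (hσ : Measurable σ) (g : Ed d → ℝ≥0∞) (hg : Measurable g) :
    ∫⁻ x, g x ∂(nu d σ) = ∫⁻ x, ENNReal.ofReal (σ x) * g x := by
  rw [nu, lintegral_withDensity_eq_lintegral_mul _ (by fun_prop) hg]; rfl

lemma moll_enorm (d : ℕ) (η : Ed d → ℝ) (hη : IsMollifier d η) (ε : ℝ) (hε : 0 < ε) (f : Ed d → ℝ)
    (x : Ed d) : ‖mollify d η ε f x‖ₑ ≤ ∫⁻ z, ‖f (x - ε • z)‖ₑ ∂(mu d η) := by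
  rw [mollify_eq d η hη ε hε]; exact enorm_integral_le_lintegral_enorm _

instance (d : ℕ) (η : Ed d → ℝ) : SFinite (mu d η) := by unfold mu; infer_instance

lemma B1 (d : ℕ) (hd : 1 ≤ d) (η : Ed d → ℝ) (hη : IsMollifier d η) (p : ℝ) (hp : 1 < p)
    (ρ : Ed d → ℝ) (hρm : Measurable ρ) (c C γ₀ γ : ℝ) (hw : TwoPowerWeight d ρ c C γ₀ γ)
    (hγ₀ : γ₀ ∈ Set.Ico (0:ℝ) d) (ε₀ : ℝ) (hε₀ : 0 < ε₀) :
    ∃ K : ℝ≥0∞, K ≠ ⊤ ∧ ∀ ε : ℝ, 0 < ε → ε ≤ ε₀ → ∀ f : Ed d → ℝ, Measurable f →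
      Measurable (mollify d η ε f) →
      ∫⁻ x, ‖mollify d η ε f x‖ₑ ^ p ∂(nu d ρ) ≤ K * ∫⁻ x, ‖f x‖ₑ ^ p ∂(nu d ρ) := by
  obtain ⟨K, hK, hA⟩ := A1 d hd η hη ρ c C γ₀ γ hw hγ₀ ε₀ hε₀
  have := mu_prob d η hη
  refine ⟨ENNReal.ofReal K, by simp, fun ε hε hεε f hf hmf => ?_⟩
  rw [nu_lint d ρ hρm _ (by fun_prop), nu_lint d ρ hρm _ (by fun_prop)]
  calc _ ≤ ∫⁻ x, ∫⁻ z, ENNReal.ofReal (ρ x) * ‖f (x - ε • z)‖ₑ ^ p ∂(mu d η) := by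
        refine lintegral_mono fun x => ?_
        rw [lintegral_const_mul _ (by fun_prop)]
        gcongr
        refine le_trans ?_ (jensen _ p hp _ (by fun_prop))
        have := moll_enorm d η hη ε hε f x
        gcongr
    _ = ∫⁻ z, (∫⁻ x, ENNReal.ofReal (ρ x) * ‖f (x - ε • z)‖ₑ ^ p) ∂(mu d η) := by
        exact lintegral_lintegral_swap (Measurable.aemeasurable (by fun_prop))
    _ = ∫⁻ z, (∫⁻ x, ENNReal.ofReal (ρ (x + ε • z)) * ‖f x‖ₑ ^ p) ∂(mu d η) := by
        refine lintegral_congr fun z => ?_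
        rw [← lintegral_add_right_eq_self (μ := volume) _ (ε • z)]
        simp
    _ = ∫⁻ x, ∫⁻ z, ENNReal.ofReal (ρ (x + ε • z)) * ‖f x‖ₑ ^ p ∂(mu d η) := by
        exact lintegral_lintegral_swap (Measurable.aemeasurable (by fun_prop))
    _ ≤ ∫⁻ x, ENNReal.ofReal K * (ENNReal.ofReal (ρ x) * ‖f x‖ₑ ^ p) := by
        refine lintegral_mono_ae ?_
        filter_upwards [hA (-ε) (by simpa using hε.ne') (by simpa [abs_of_pos hε] using hεε)] with x hx
        rw [lintegral_mul_const _ (by fun_prop), ← mul_assoc, ← ENNReal.ofReal_mul hK]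
        gcongr
        simpa using hx
    _ = _ := by rw [lintegral_const_mul _ (by fun_prop)]

lemma B2 (d : ℕ) (hd : 1 ≤ d) (η : Ed d → ℝ) (hη : IsMollifier d η) (p : ℝ) (hp : 1 < p)
    (ρ : Ed d → ℝ) (hρpos : ∀ x, 0 < ρ x) (hρm : Measurable ρ) (c C γ₀ γ : ℝ)
    (hw : TwoPowerWeight d ρ c C γ₀ γ)
    (hγ₀ : γ₀ ∈ Set.Ico (0:ℝ) d) (ε₀ : ℝ) (hε₀ : 0 < ε₀) :
    ∃ K : ℝ≥0∞, K ≠ ⊤ ∧ ∀ ε : ℝ, 0 < ε → ε ≤ ε₀ → ∀ f : Ed d → ℝ, Measurable f →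
      Measurable (mollify d η ε f) →
      ∫⁻ x, ‖mollify d η ε f x‖ₑ ^ (p / (p - 1)) ∂(nu d fun x => ρ x ^ (-(p / (p - 1) - 1)))
        ≤ K * ∫⁻ x, ‖f x‖ₑ ^ (p / (p - 1)) ∂(nu d fun x => ρ x ^ (-(p / (p - 1) - 1))) := by
  obtain ⟨K, hK, hA⟩ := A1 d hd η hη ρ c C γ₀ γ hw hγ₀ ε₀ hε₀
  have := mu_prob d η hη
  have hp1 : 0 < p - 1 := by linarith
  have hq1 : 0 ≤ p / (p - 1) - 1 := by
    rw [sub_nonneg, le_div_iff₀ hp1]; linarith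
  have hh := fun (g P : Ed d → ℝ≥0∞) => holder_w (mu d η) p hp g P
  obtain ⟨q, hq⟩ : ∃ q, q = p / (p - 1) := ⟨_, rfl⟩
  rw [← hq] at hq1 hh ⊢
  refine ⟨ENNReal.ofReal K ^ (q - 1), ENNReal.rpow_ne_top_of_nonneg hq1 (by simp), fun ε hε hεε f hf hmf => ?_⟩
  rw [nu_lint d _ (by fun_prop) _ (by fun_prop), nu_lint d _ (by fun_prop) _ (by fun_prop)]
  have hs : ∀ x, ENNReal.ofReal (ρ x ^ (-(q - 1))) = ENNReal.ofReal (ρ x) ^ (-(q - 1)) := fun x =>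
    (ENNReal.ofReal_rpow_of_pos (hρpos x)).symm
  have h0 : ∀ x, ENNReal.ofReal (ρ x) ≠ 0 := fun x => by simpa using hρpos x
  simp_rw [hs]
  calc _ ≤ ∫⁻ x, ENNReal.ofReal K ^ (q - 1) * ∫⁻ z, ‖f (x - ε • z)‖ₑ ^ q *
          ENNReal.ofReal (ρ (x - ε • z)) ^ (-(q - 1)) ∂(mu d η) := by
        refine lintegral_mono_ae ?_
        filter_upwards [hA ε hε.ne' (by simpa [abs_of_pos hε] using hεε)] with x hx
        have h1 : ‖mollify d η ε f x‖ₑ ^ q ≤ (∫⁻ z, ‖f (x - ε • z)‖ₑ ∂(mu d η)) ^ q := by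
          have := moll_enorm d η hη ε hε f x
          have : 0 ≤ q := by linarith
          gcongr
        have h2 := h1.trans (hh (fun z => ‖f (x - ε • z)‖ₑ) (fun z => ENNReal.ofReal (ρ (x - ε • z)))
          (by fun_prop) (by fun_prop) (fun z => h0 _) (fun z => ENNReal.ofReal_ne_top))
        refine (mul_le_mul_right h2 _).trans ?_
        rw [mul_left_comm, mul_comm]
        refine mul_le_mul_left ?_ _
        calc _ ≤ ENNReal.ofReal (ρ x) ^ (-(q - 1)) * (ENNReal.ofReal (K * ρ x)) ^ (q - 1) := by gcongr
          _ = _ := by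
            rw [ENNReal.ofReal_mul hK, ENNReal.mul_rpow_of_nonneg _ _ hq1, mul_left_comm,
              ← ENNReal.rpow_add _ _ (h0 x) ENNReal.ofReal_ne_top, neg_add_cancel, ENNReal.rpow_zero,
              mul_one]
    _ = ENNReal.ofReal K ^ (q - 1) * ∫⁻ x, ∫⁻ z, ‖f (x - ε • z)‖ₑ ^ q *
          ENNReal.ofReal (ρ (x - ε • z)) ^ (-(q - 1)) ∂(mu d η) := by
        rw [lintegral_const_mul]
        refine Measurable.lintegral_prod_right' (f := fun w : Ed d × Ed d => ‖f (w.1 - ε • w.2)‖ₑ ^ q *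
          ENNReal.ofReal (ρ (w.1 - ε • w.2)) ^ (-(q - 1))) (by fun_prop)
    _ = ENNReal.ofReal K ^ (q - 1) * ∫⁻ z, (∫⁻ x, ‖f (x - ε • z)‖ₑ ^ q *
          ENNReal.ofReal (ρ (x - ε • z)) ^ (-(q - 1))) ∂(mu d η) := by
        congr 1
        exact lintegral_lintegral_swap (Measurable.aemeasurable (by fun_prop))
    _ = _ := by
        congr 1
        have : ∀ z, ∫⁻ x, ‖f (x - ε • z)‖ₑ ^ q * ENNReal.ofReal (ρ (x - ε • z)) ^ (-(q - 1)) =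
            ∫⁻ x, ENNReal.ofReal (ρ x) ^ (-(q - 1)) * ‖f x‖ₑ ^ q := fun z => by
          rw [lintegral_sub_right_eq_self (μ := volume)
            (fun x => ‖f x‖ₑ ^ q * ENNReal.ofReal (ρ x) ^ (-(q - 1))) (ε • z)]
          simp_rw [mul_comm]
        simp_rw [this]
        simp
end

open MeasureTheory Filter Metric Set
open scoped Topology ENNReal

noncomputable section

lemma psi_cd (d : ℕ) (η : Ed d → ℝ) (hη : IsMollifier d η) (ε : ℝ) :
    ContDiff ℝ (⊤ : ℕ∞) (fun t => ε ^ (-(d:ℝ)) * η (ε⁻¹ • t)) := by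
  have := hη.1
  exact contDiff_const.mul (this.comp (contDiff_const_smul _))

lemma psi_cs (d : ℕ) (η : Ed d → ℝ) (hη : IsMollifier d η) (ε : ℝ) (hε : 0 < ε) :
    HasCompactSupport (fun t => ε ^ (-(d:ℝ)) * η (ε⁻¹ • t)) := by
  have := (moll_cs d η hη).comp_smul (inv_ne_zero hε.ne')
  exact this.mul_left

lemma moll_cont (d : ℕ) (s : ℝ) (η : Ed d → ℝ) (hη : IsMollifier d η) (ε : ℝ) (hε : 0 < ε)
    (f : Ed d → ℝ) (hfi : Integrable (fun z => f z * wt d s z)) :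
    ContDiff ℝ (⊤ : ℕ∞) (mollify d η ε f) :=
  cv_contDiff d s _ (psi_cd d η hη ε) (psi_cs d η hη ε hε) f hfi

lemma moll_sub (d : ℕ) (s : ℝ) (hs : 0 < s) (η : Ed d → ℝ) (hη : IsMollifier d η) (ε : ℝ) (hε : 0 < ε)
    (f g : Ed d → ℝ) (hf : Measurable f) (hg : Measurable g)
    (hfi : Integrable (fun z => f z * wt d s z)) (hgi : Integrable (fun z => g z * wt d s z)) :
    mollify d η ε (f - g) = mollify d η ε f - mollify d η ε g := by
  funext x
  have h1 := cv_int d s hs _ (psi_cd d η hη ε).continuous (psi_cs d η hη ε hε) f hf hfi x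
  have h2 := cv_int d s hs _ (psi_cd d η hη ε).continuous (psi_cs d η hη ε hε) g hg hgi x
  simp only [mollify, Pi.sub_apply]
  rw [← integral_sub h1 h2]
  simp only [mul_sub]

lemma conv_cc (d : ℕ) (η : Ed d → ℝ) (hη : IsMollifier d η) (q : ℝ) (hq : 1 < q) (ν : Measure (Ed d))
    [IsLocallyFiniteMeasure ν] (g : Ed d → ℝ) (hg : Continuous g) (hgc : HasCompactSupport g)
    (τ : ℝ≥0∞) (hτ : τ ≠ 0) :
    ∀ᶠ ε in 𝓝[>] (0:ℝ), eLpNorm (mollify d η ε g - g) (ENNReal.ofReal q) ν ≤ τ := by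
  have := mu_prob d η hη
  obtain ⟨R, hR⟩ := hgc.isCompact.isBounded.subset_closedBall (0 : Ed d)
  have hz : ∀ x, R < ‖x‖ → g x = 0 := fun x hx => by
    by_contra h
    have := hR (subset_tsupport g h)
    simp at this
    linarith
  have hB : ν (closedBall (0 : Ed d) (R + 1)) ^ (1 / (ENNReal.ofReal q).toReal) ≠ ⊤ :=
    ENNReal.rpow_ne_top_of_nonneg (by positivity) (isCompact_closedBall _ _).measure_lt_top.ne
  obtain ⟨n, hn, hnτ⟩ := ENNReal.exists_nnreal_pos_mul_lt hB hτ
  have huc : UniformContinuous g := hgc.uniformContinuous_of_continuous hg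
  obtain ⟨δ, hδ, hu⟩ := Metric.uniformContinuous_iff.1 huc n (by exact_mod_cast hn)
  have hmem : Ioo (0:ℝ) (min δ 1) ∈ 𝓝[>] (0:ℝ) := Ioo_mem_nhdsGT (by positivity)
  filter_upwards [hmem] with ε hε
  have hε1 : ε < δ := hε.2.trans_le (min_le_left _ _)
  have hε2 : ε < 1 := hε.2.trans_le (min_le_right _ _)
  have hε0 : 0 < ε := hε.1
  have hsm : ∀ z : Ed d, ‖z‖ ≤ 1 → ‖ε • z‖ ≤ ε := fun z hz => by
    rw [norm_smul, Real.norm_eq_abs, abs_of_pos hε0]; nlinarith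
  refine (eLpNorm_mono_real (g := (closedBall (0 : Ed d) (R + 1)).indicator fun _ => (n : ℝ)) ?_).trans ?_
  · intro x
    simp only [Pi.sub_apply]
    rw [mollify_eq d η hη ε hε0]
    rcases le_or_gt ‖x‖ (R + 1) with h | h
    · rw [indicator_of_mem (by simpa using h)]
      have hi : Integrable (fun z => g (x - ε • z)) (mu d η) := by
        obtain ⟨M, hM⟩ := hgc.exists_bound_of_continuous hg
        exact Integrable.of_bound (Continuous.aestronglyMeasurable (by fun_prop)) M
          (Eventually.of_forall fun z => hM _)
      have e : ∫ z, g (x - ε • z) ∂(mu d η) - g x = ∫ z, (g (x - ε • z) - g x) ∂(mu d η) := by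
        rw [integral_sub hi (integrable_const _)]; simp
      rw [e]
      refine (norm_integral_le_of_norm_le_const (C := (n:ℝ)) ?_).trans (by simp)
      filter_upwards [mu_ball d η hη] with z hz
      rw [← dist_eq_norm]
      refine (hu ?_).le
      rw [dist_eq_norm]
      have := hsm z hz
      simpa using this.trans_lt hε1
    · rw [indicator_of_notMem (by simpa using h), hz x (by linarith), sub_zero]
      rw [integral_eq_zero_of_ae]
      · simp
      · filter_upwards [mu_ball d η hη] with z hz1
        refine hz _ ?_
        have := hsm z hz1
        have := norm_sub_norm_le x (ε • z)
        linarith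
  · rw [eLpNorm_indicator_const measurableSet_closedBall (by simp; linarith) (by simp)]
    refine le_trans (le_of_eq ?_) hnτ.le
    congr 1
    simp

lemma cc_wt (d : ℕ) (s : ℝ) (g : Ed d → ℝ) (hg : Continuous g) (hgc : HasCompactSupport g) :
    Integrable (fun z => g z * wt d s z) :=
  (hg.mul (wt_cont d s)).integrable_of_hasCompactSupport hgc.mul_right

lemma conv_gen (d : ℕ) (s : ℝ) (hs : 0 < s) (η : Ed d → ℝ) (hη : IsMollifier d η) (q : ℝ) (hq : 1 < q)
    (ν : Measure (Ed d)) [IsLocallyFiniteMeasure ν]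
    (K : ℝ≥0∞) (hK : K ≠ ⊤) (hb : ∀ ε : ℝ, 0 < ε → ε ≤ 1 → ∀ f : Ed d → ℝ, Measurable f →
      Measurable (mollify d η ε f) →
      eLpNorm (mollify d η ε f) (ENNReal.ofReal q) ν ≤ K * eLpNorm f (ENNReal.ofReal q) ν)
    (f : Ed d → ℝ) (hf : Measurable f) (hfi : Integrable (fun z => f z * wt d s z))
    (hfL : MemLp f (ENNReal.ofReal q) ν) :
    Tendsto (fun ε => eLpNorm (mollify d η ε f - f) (ENNReal.ofReal q) ν) (𝓝[>] (0:ℝ)) (𝓝 0) := by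
  rw [ENNReal.tendsto_nhds_zero]
  intro δ hδ
  have hK2 : K + 2 ≠ ⊤ := by simp [hK]
  have hτ : δ / (K + 2) ≠ 0 := ENNReal.div_ne_zero.2 ⟨hδ.ne', hK2⟩
  obtain ⟨τ, hτd⟩ : ∃ τ, τ = δ / (K + 2) := ⟨_, rfl⟩
  rw [← hτd] at hτ
  obtain ⟨g, hgc, hgf, hg, hgL⟩ := hfL.exists_hasCompactSupport_eLpNorm_sub_le (by simp) hτ
  have hgi := cc_wt d s g hg hgc
  have hgm := hg.measurable
  have hmem : Ioc (0:ℝ) 1 ∈ 𝓝[>] (0:ℝ) := Ioc_mem_nhdsGT (by norm_num)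
  have h1q : (1:ℝ≥0∞) ≤ ENNReal.ofReal q := by
    rw [← ENNReal.ofReal_one]; exact ENNReal.ofReal_le_ofReal hq.le
  filter_upwards [hmem, conv_cc d η hη q hq ν g hg hgc τ hτ] with ε hε hcc
  have hfgi : Integrable (fun z => (f - g) z * wt d s z) := by
    simp only [Pi.sub_apply, sub_mul]; exact hfi.sub hgi
  have c1 := (moll_cont d s η hη ε hε.1 (f - g) hfgi).continuous.measurable
  have c2 := (moll_cont d s η hη ε hε.1 g hgi).continuous.measurable
  have e : mollify d η ε f - f = (mollify d η ε (f - g) - (f - g)) + (mollify d η ε g - g) := by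
    rw [moll_sub d s hs η hη ε hε.1 f g hf hgm hfi hgi]; abel
  rw [e]
  calc _ ≤ eLpNorm (mollify d η ε (f - g) - (f - g)) (ENNReal.ofReal q) ν
        + eLpNorm (mollify d η ε g - g) (ENNReal.ofReal q) ν :=
        eLpNorm_add_le (c1.sub (hf.sub hgm)).aestronglyMeasurable (c2.sub hgm).aestronglyMeasurable h1q
    _ ≤ (eLpNorm (mollify d η ε (f - g)) (ENNReal.ofReal q) ν + eLpNorm (f - g) (ENNReal.ofReal q) ν)
        + τ := by
        gcongr
        exact eLpNorm_sub_le c1.aestronglyMeasurable (hf.sub hgm).aestronglyMeasurable h1q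
    _ ≤ (K * τ + τ) + τ := by
        gcongr
        refine (hb ε hε.1 hε.2 _ (hf.sub hgm) c1).trans ?_
        gcongr
    _ = (K + 2) * τ := by ring
    _ ≤ δ := by rw [hτd]; exact ENNReal.mul_div_le

lemma bound_eLp (d : ℕ) (q : ℝ) (hq : 1 < q) (ν : Measure (Ed d)) (K : ℝ≥0∞) (f g : Ed d → ℝ)
    (h : ∫⁻ x, ‖f x‖ₑ ^ q ∂ν ≤ K * ∫⁻ x, ‖g x‖ₑ ^ q ∂ν) :
    eLpNorm f (ENNReal.ofReal q) ν ≤ K ^ (1 / q) * eLpNorm g (ENNReal.ofReal q) ν := by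
  have h0 : ENNReal.ofReal q ≠ 0 := by simp; linarith
  have hq0 : 0 ≤ q := by linarith
  rw [eLpNorm_eq_lintegral_rpow_enorm_toReal h0 (by simp), eLpNorm_eq_lintegral_rpow_enorm_toReal h0 (by simp),
    ENNReal.toReal_ofReal hq0, ← ENNReal.mul_rpow_of_nonneg _ _ (by positivity)]
  gcongr

lemma lint_eq (d : ℕ) (q : ℝ) (hq : 1 < q) (σ : Ed d → ℝ) (hσ : Measurable σ) (h0 : ∀ x, 0 < σ x)
    (f : Ed d → ℝ) (hf : Measurable f) :
    ∫⁻ x, ‖f x‖ₑ ^ q ∂(nu d σ) = ∫⁻ x, ENNReal.ofReal (|f x| ^ q * σ x) := by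
  rw [nu_lint d σ hσ _ (by fun_prop)]
  refine lintegral_congr fun x => ?_
  rw [Real.enorm_eq_ofReal_abs, ENNReal.ofReal_rpow_of_nonneg (abs_nonneg _) (by linarith),
    ← ENNReal.ofReal_mul (h0 x).le, mul_comm]

lemma wNorm_eq (d : ℕ) (q : ℝ) (hq : 1 < q) (σ : Ed d → ℝ) (hσ : Measurable σ) (h0 : ∀ x, 0 < σ x)
    (f : Ed d → ℝ) (hf : Measurable f) :
    wNorm d q σ f = (eLpNorm f (ENNReal.ofReal q) (nu d σ)).toReal := by
  have h0' : ENNReal.ofReal q ≠ 0 := by simp; linarith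
  rw [eLpNorm_eq_lintegral_rpow_enorm_toReal h0' (by simp), ENNReal.toReal_ofReal (by linarith),
    lint_eq d q hq σ hσ h0 f hf, ← ENNReal.toReal_rpow, wNorm,
    integral_eq_lintegral_of_nonneg_ae (Eventually.of_forall fun x => by
      have := h0 x; simp only [Pi.zero_apply]; positivity) (Measurable.aestronglyMeasurable (by fun_prop))]

lemma memWLp_iff (d : ℕ) (q : ℝ) (hq : 1 < q) (σ : Ed d → ℝ) (hσ : Measurable σ) (h0 : ∀ x, 0 < σ x)
    (f : Ed d → ℝ) (hf : Measurable f) :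
    MemWLp d q σ f ↔ eLpNorm f (ENNReal.ofReal q) (nu d σ) < ⊤ := by
  have h0' : ENNReal.ofReal q ≠ 0 := by simp; linarith
  rw [eLpNorm_lt_top_iff_lintegral_rpow_enorm_lt_top h0' (by simp), ENNReal.toReal_ofReal (by linarith),
    lint_eq d q hq σ hσ h0 f hf, MemWLp]
  have hm : AEStronglyMeasurable (fun x => |f x| ^ q * σ x) volume :=
    Measurable.aestronglyMeasurable (by fun_prop)
  have hnn : 0 ≤ᵐ[volume] fun x => |f x| ^ q * σ x := Eventually.of_forall fun x => by
      have := h0 x; simp only [Pi.zero_apply]; positivity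
  constructor
  · rintro ⟨-, h⟩
    exact (hasFiniteIntegral_iff_ofReal hnn).1 h.2
  · intro h
    exact ⟨hf.aestronglyMeasurable, hm, (hasFiniteIntegral_iff_ofReal hnn).2 h⟩

lemma nu_lf (d : ℕ) (s k : ℝ) (σ : Ed d → ℝ) (hi : Integrable (fun x => wt d s x ^ k * σ x)) :
    IsLocallyFiniteMeasure (nu d σ) := by
  have hc : Continuous (fun z => (wt d s z ^ k)⁻¹) :=
    ((wt_cont d s).rpow_const fun x => Or.inl (wt_pos d s x).ne').inv₀
      (fun x => (Real.rpow_pos_of_pos (wt_pos d s x) _).ne')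
  have hl : LocallyIntegrable σ := by
    have h := hi.locallyIntegrable.locallyIntegrableOn univ
    rw [← locallyIntegrableOn_univ]
    have := h.mul_continuousOn hc.continuousOn isOpen_univ.isLocallyClosed
    refine this.congr ?_
    filter_upwards with z
    have := (Real.rpow_pos_of_pos (wt_pos d s z) k).ne'
    field_simp
  refine ⟨fun x => ⟨closedBall x 1, closedBall_mem_nhds x one_pos, ?_⟩⟩
  rw [nu, withDensity_apply _ measurableSet_closedBall]
  have := (hl.integrableOn_isCompact (isCompact_closedBall x 1)).2
  refine lt_of_le_of_lt (lintegral_mono fun y => ?_) this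
  exact Real.ofReal_le_enorm _
end

open MeasureTheory Filter Metric Set
open scoped Topology ENNReal

noncomputable section

lemma stmt_meas (d : ℕ) (hd : 1 ≤ d) (s : ℝ) (hs : s ∈ Set.Ioo (0:ℝ) 1)
    (Cds : ℝ) (p : ℝ) (hp : 1 < p)
    (ρ : Ed d → ℝ) (hρpos : ∀ x, 0 < ρ x) (hρm : Measurable ρ)
    (c C γ₀ γ : ℝ) (hw : TwoPowerWeight d ρ c C γ₀ γ)
    (hγ₀ : γ₀ ∈ Set.Ico (0:ℝ) d) (hγ : γ ∈ Set.Icc (0:ℝ) ((d:ℝ) + p * s))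
    (η : Ed d → ℝ) (hη : IsMollifier d η)
    (v V : Ed d → ℝ) (hv : Measurable v) (hV : Measurable V) (hvV : MemX d s Cds p ρ v V) :
    (∀ ε > (0:ℝ),
      (∀ x : Ed d, fracLap d s Cds (mollify d η ε v) x = mollify d η ε V x) ∧
      ContDiff ℝ (⊤ : ℕ∞) (mollify d η ε v) ∧
      MemX d s Cds p ρ (mollify d η ε v) (mollify d η ε V)) ∧
    Tendsto (fun ε : ℝ =>
        xNorm d p ρ (fun x => mollify d η ε v x - v x)
          (fun x => mollify d η ε V x - V x))
      (𝓝[>] (0:ℝ)) (𝓝 0) := by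
  have hp1 : 0 < p - 1 := by linarith
  have hq1 : 1 < p / (p - 1) := by rw [lt_div_iff₀ hp1]; linarith
  have hσm : Measurable (fun x => ρ x ^ (-(p / (p - 1) - 1))) := by fun_prop
  have hσ0 : ∀ x, 0 < ρ x ^ (-(p / (p - 1) - 1)) := fun x => Real.rpow_pos_of_pos (hρpos x) _
  have hvi := v_wt_int d hd s hs.1 p hp ρ hρpos hρm c C γ₀ γ hw hγ₀ hγ v hvV.1
  have hVi := V_wt_int d hd s hs.1 p hp ρ hρpos hρm c C γ₀ γ hw hγ₀ hγ V hvV.2.2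
  have hv1 := (memWLp_iff d p hp ρ hρm hρpos v hv).1 hvV.1
  have hV1 := (memWLp_iff d _ hq1 _ hσm hσ0 V hV).1 hvV.2.2
  have cv' : ∀ ε > (0:ℝ), Measurable (mollify d η ε v) := fun ε hε =>
    (moll_cont d s η hη ε hε v hvi).continuous.measurable
  have cV' : ∀ ε > (0:ℝ), Measurable (mollify d η ε V) := fun ε hε =>
    (moll_cont d s η hη ε hε V hVi).continuous.measurable
  have bd1 : ∀ ε₀ > (0:ℝ), ∃ K : ℝ≥0∞, K ≠ ⊤ ∧ ∀ ε : ℝ, 0 < ε → ε ≤ ε₀ → ∀ f : Ed d → ℝ, Measurable f →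
      Measurable (mollify d η ε f) →
      eLpNorm (mollify d η ε f) (ENNReal.ofReal p) (nu d ρ)
        ≤ K * eLpNorm f (ENNReal.ofReal p) (nu d ρ) := fun ε₀ hε₀ => by
    obtain ⟨K, hK, h⟩ := B1 d hd η hη p hp ρ hρm c C γ₀ γ hw hγ₀ ε₀ hε₀
    exact ⟨K ^ (1 / p), ENNReal.rpow_ne_top_of_nonneg (by positivity) hK,
      fun ε h1 h2 f h3 h4 => bound_eLp d p hp _ K _ _ (h ε h1 h2 f h3 h4)⟩
  have bd2 : ∀ ε₀ > (0:ℝ), ∃ K : ℝ≥0∞, K ≠ ⊤ ∧ ∀ ε : ℝ, 0 < ε → ε ≤ ε₀ → ∀ f : Ed d → ℝ, Measurable f →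
      Measurable (mollify d η ε f) →
      eLpNorm (mollify d η ε f) (ENNReal.ofReal (p / (p - 1))) (nu d fun x => ρ x ^ (-(p / (p - 1) - 1)))
        ≤ K * eLpNorm f (ENNReal.ofReal (p / (p - 1))) (nu d fun x => ρ x ^ (-(p / (p - 1) - 1))) :=
      fun ε₀ hε₀ => by
    obtain ⟨K, hK, h⟩ := B2 d hd η hη p hp ρ hρpos hρm c C γ₀ γ hw hγ₀ ε₀ hε₀
    exact ⟨K ^ (1 / (p / (p - 1))), ENNReal.rpow_ne_top_of_nonneg (by positivity) hK,
      fun ε h1 h2 f h3 h4 => bound_eLp d _ hq1 _ K _ _ (h ε h1 h2 f h3 h4)⟩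
  refine ⟨fun ε hε => ⟨fun x => ?_, moll_cont d s η hη ε hε v hvi, ?_, ?_, ?_⟩, ?_⟩
  · exact part1 d hd s hs Cds _ (psi_cd d η hη ε) (psi_cs d η hη ε hε) v V hv hvi hvV.2.1 x
  · rw [memWLp_iff d p hp ρ hρm hρpos _ (cv' ε hε)]
    obtain ⟨K, hK, h⟩ := bd1 ε hε
    exact (h ε hε le_rfl v hv (cv' ε hε)).trans_lt (ENNReal.mul_lt_top hK.lt_top hv1)
  · exact part3 d hd s hs Cds _ (psi_cd d η hη ε) (psi_cs d η hη ε hε) v V hv hvi hV hVi hvV.2.1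
  · rw [memWLp_iff d _ hq1 _ hσm hσ0 _ (cV' ε hε)]
    obtain ⟨K, hK, h⟩ := bd2 ε hε
    exact (h ε hε le_rfl V hV (cV' ε hε)).trans_lt (ENNReal.mul_lt_top hK.lt_top hV1)
  · have lf1 := nu_lf d s p ρ (rho_wt_int d hd s hs.1 p hp ρ hρpos hρm c C γ₀ γ hw hγ₀ hγ.1)
    have lf2 := nu_lf d s _ _ (rhoinv_wt_int d hd s hs.1 p hp ρ hρpos hρm c C γ₀ γ hw hγ₀ hγ)
    obtain ⟨K1, hK1, h1⟩ := bd1 1 one_pos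
    obtain ⟨K2, hK2, h2⟩ := bd2 1 one_pos
    have t1 := conv_gen d s hs.1 η hη p hp (nu d ρ) K1 hK1 h1 v hv hvi ⟨hv.aestronglyMeasurable, hv1⟩
    have t2 := conv_gen d s hs.1 η hη _ hq1 (nu d fun x => ρ x ^ (-(p / (p - 1) - 1))) K2 hK2 h2 V hV hVi
      ⟨hV.aestronglyMeasurable, hV1⟩
    have t1' := (ENNReal.tendsto_toReal ENNReal.zero_ne_top).comp t1
    have t2' := (ENNReal.tendsto_toReal ENNReal.zero_ne_top).comp t2
    have t3 := ((t1'.pow 2).add (t2'.pow 2)).sqrt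
    simp only [ENNReal.toReal_zero, ne_eq, OfNat.ofNat_ne_zero, not_false_eq_true, zero_pow, add_zero,
      Real.sqrt_zero] at t3
    refine t3.congr' ?_
    filter_upwards [self_mem_nhdsWithin] with ε hε
    unfold xNorm
    rw [wNorm_eq d p hp ρ hρm hρpos (fun x => mollify d η ε v x - v x) ((cv' ε hε).sub hv), wNorm_eq d _ hq1 _ hσm hσ0
      (fun x => mollify d η ε V x - V x) ((cV' ε hε).sub hV)]
    rfl

lemma moll_congr (d : ℕ) (η : Ed d → ℝ) (ε : ℝ) (f g : Ed d → ℝ) (h : f =ᵐ[volume] g) :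
    mollify d η ε f = mollify d η ε g := by
  funext x
  refine integral_congr_ae ?_
  filter_upwards [h] with y hy
  rw [hy]

lemma wNorm_congr (d : ℕ) (q : ℝ) (σ f g : Ed d → ℝ) (h : f =ᵐ[volume] g) :
    wNorm d q σ f = wNorm d q σ g := by
  unfold wNorm
  congr 1
  refine integral_congr_ae ?_
  filter_upwards [h] with y hy
  rw [hy]

lemma memWLp_congr (d : ℕ) (q : ℝ) (σ f g : Ed d → ℝ) (h : f =ᵐ[volume] g) (hf : MemWLp d q σ f) :
    MemWLp d q σ g := by
  refine ⟨hf.1.congr h, hf.2.congr ?_⟩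
  filter_upwards [h] with y hy
  rw [hy]

lemma dist_congr (d : ℕ) (s Cds : ℝ) (v V v' V' : Ed d → ℝ) (h : v =ᵐ[volume] v') (hV : V =ᵐ[volume] V')
    (hf : IsDistFracLap d s Cds v V) : IsDistFracLap d s Cds v' V' := by
  intro φ h1 h2
  have e1 : ∫ x, v' x * fracLap d s Cds φ x = ∫ x, v x * fracLap d s Cds φ x :=
    integral_congr_ae (by filter_upwards [h] with y hy; rw [hy])
  have e2 : ∫ x, V' x * φ x = ∫ x, V x * φ x :=
    integral_congr_ae (by filter_upwards [hV] with y hy; rw [hy])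
  rw [e1, e2, hf φ h1 h2]

end
theorem stmt15 (d : ℕ) (hd : 1 ≤ d) (s : ℝ) (hs : s ∈ Set.Ioo (0:ℝ) 1)
    (Cds : ℝ) (hC : 0 < Cds) (p : ℝ) (hp : 1 < p)
    (ρ : Ed d → ℝ) (hρpos : ∀ x, 0 < ρ x) (hρm : Measurable ρ)
    (c C γ₀ γ : ℝ) (hw : TwoPowerWeight d ρ c C γ₀ γ)
    (hγ₀ : γ₀ ∈ Set.Ico (0:ℝ) d) (hγ : γ ∈ Set.Icc (0:ℝ) ((d:ℝ) + p * s))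
    (η : Ed d → ℝ) (hη : IsMollifier d η)
    (v V : Ed d → ℝ) (hvV : MemX d s Cds p ρ v V) :
    (∀ ε > (0:ℝ),
      (∀ x : Ed d, fracLap d s Cds (mollify d η ε v) x = mollify d η ε V x) ∧
      ContDiff ℝ (⊤ : ℕ∞) (mollify d η ε v) ∧
      MemX d s Cds p ρ (mollify d η ε v) (mollify d η ε V)) ∧
    Tendsto (fun ε : ℝ =>
        xNorm d p ρ (fun x => mollify d η ε v x - v x)
          (fun x => mollify d η ε V x - V x))
      (𝓝[>] (0:ℝ)) (𝓝 0) := by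

  have hv := hvV.1.1.ae_eq_mk
  have hV := hvV.2.2.1.ae_eq_mk
  have h := stmt_meas d hd s hs Cds p hp ρ hρpos hρm c C γ₀ γ hw hγ₀ hγ η hη _ _
    hvV.1.1.stronglyMeasurable_mk.measurable hvV.2.2.1.stronglyMeasurable_mk.measurable
    ⟨memWLp_congr d _ _ _ _ hv hvV.1, dist_congr d s Cds _ _ _ _ hv hV hvV.2.1,
      memWLp_congr d _ _ _ _ hV hvV.2.2⟩
  simp only [← moll_congr d η _ _ _ hv, ← moll_congr d η _ _ _ hV] at h
  refine ⟨h.1, h.2.congr fun ε => ?_⟩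
  unfold xNorm
  rw [wNorm_congr d p ρ _ (fun x => mollify d η ε v x - v x),
    wNorm_congr d (p / (p - 1)) _ _ (fun x => mollify d η ε V x - V x)]
  · filter_upwards [hV] with x hx
    rw [hx]
  · filter_upwards [hv] with x hx
    rw [hx]
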